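/- arXiv:2307.06885 — 2 statements merged into one kernel-verified Lean document; each statement's English description precedes it below -/
import Mathlib

section
/- Let Ω ⊂ ℝ² be a bounded, open, connected set with Lipschitz boundary and let u ∈ W^{1,1}(Ω;S¹) be such that ⟨Det(∇u),φ⟩ = π Σ_{i=1}^{n} (φ(x_i) − φ(y_i)) for all φ ∈ Lip₀(Ω), where the finite family ((x_i,y_i))_{i=1}^n of pairs of points of cl(Ω) satisfies (P_f). Then for every ε > 0 there exist u_ε ∈ W^{1,1}(Ω;S¹) and points x_i^ε, y_i^ε ∈ cl(Ω), i = 1,…,n, such that: (i) ⟨Det(∇u_ε),φ⟩ = π Σ_{i=1}^{n} (φ(x_i^ε) − φ(y_i^ε)) for all φ ∈ Lip₀(Ω), and the points among the x_i^ε, y_i^ε lying in Ω are distinct and three by three not collinear; (ii) ‖u − u_ε‖_{W^{1,1}} + ‖Det(∇u) − Det(∇u_ε)‖_flat < ε. -/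
open MeasureTheory Metric Filter Set
open scoped ENNReal NNReal Topology Classical

noncomputable section

abbrev R2 := EuclideanSpace ℝ (Fin 2)

/-- `Ω ⊂ ℝ²` has Lipschitz boundary: near every boundary point, after a rigid motion,
`Ω` coincides with the open region strictly above the graph of a Lipschitz function. -/
def HasLipschitzBoundary (Ω : Set R2) : Prop :=
  ∀ p ∈ frontier Ω, ∃ r : ℝ, 0 < r ∧ ∃ (f : R2 ≃ᵢ R2) (γ : ℝ → ℝ) (L : ℝ≥0),
    LipschitzWith L γ ∧ ∀ x ∈ Metric.ball p r, (x ∈ Ω ↔ γ (f x 0) < f x 1)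

/-- `G` is the weak (distributional) gradient of `u` on `Ω`:
`∫_Ω u_i ∂_j φ = -∫_Ω G_{ij} φ` for all test functions `φ ∈ C_c^∞(Ω)`. -/
def IsWeakGradient (Ω : Set R2) (u : R2 → R2) (G : R2 → Matrix (Fin 2) (Fin 2) ℝ) : Prop :=
  ∀ φ : R2 → ℝ, ContDiff ℝ (⊤ : ℕ∞) φ → HasCompactSupport φ → tsupport φ ⊆ Ω →
    ∀ i j : Fin 2,
      (∫ x in Ω, u x i * fderiv ℝ φ x (EuclideanSpace.single j 1)) =
        - ∫ x in Ω, G x i j * φ x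

/-- `u ∈ W^{1,1}(Ω;ℝ²)` with weak gradient `G`. -/
def MemW11 (Ω : Set R2) (u : R2 → R2) (G : R2 → Matrix (Fin 2) (Fin 2) ℝ) : Prop :=
  IntegrableOn u Ω ∧ (∀ i j : Fin 2, IntegrableOn (fun x => G x i j) Ω) ∧
    IsWeakGradient Ω u G

/-- `|u| = 1` a.e. in `Ω`. -/
def SphereValued (Ω : Set R2) (u : R2 → R2) : Prop :=
  ∀ᵐ x ∂(volume.restrict Ω), ‖u x‖ = 1

/-- Frobenius norm of a `2×2` matrix. -/
def frob (M : Matrix (Fin 2) (Fin 2) ℝ) : ℝ :=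
  Real.sqrt (∑ i, ∑ j, (M i j) ^ 2)

/-- Jacobian matrix of a map `v : ℝ² → ℝ²`. -/
def jacobianMatrix (v : R2 → R2) (x : R2) : Matrix (Fin 2) (Fin 2) ℝ :=
  Matrix.of fun i j => fderiv ℝ v x (EuclideanSpace.single j 1) i

/-- Classical graph area `A(v,A) = ∫_A √(1 + |∇v|² + (Jv)²)` of a `C¹` map. -/
def classicalArea (A : Set R2) (v : R2 → R2) : ℝ≥0∞ :=
  ∫⁻ x in A, ENNReal.ofReal
    (Real.sqrt (1 + (∑ i, ∑ j, (jacobianMatrix v x i j) ^ 2) + (jacobianMatrix v x).det ^ 2))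

/-- `L¹`-relaxed area functional `𝒜(u,A)`. -/
def relaxedArea (u : R2 → R2) (A : Set R2) : ℝ≥0∞ :=
  sInf { a : ℝ≥0∞ | ∃ v : ℕ → R2 → R2,
    (∀ k, ContDiffOn ℝ 1 (v k) A) ∧
    (∀ k, IntegrableOn (fun x => v k x - u x) A) ∧
    Tendsto (fun k => ∫ x in A, ‖v k x - u x‖) atTop (nhds 0) ∧
    a = Filter.liminf (fun k => classicalArea A (v k)) atTop }

/-- `λ_u = (1/2)(u₁ ∇^⊥u₂ − u₂ ∇^⊥u₁)`, computed from the weak gradient `G`. -/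
def lambdaVec (u : R2 → R2) (G : R2 → Matrix (Fin 2) (Fin 2) ℝ) (x : R2) : Fin 2 → ℝ :=
  ![ (1 / 2) * (-(u x 0) * G x 1 1 + u x 1 * G x 0 1),
     (1 / 2) * (u x 0 * G x 1 0 - u x 1 * G x 0 0) ]

/-- Distributional Jacobian pairing `⟨Det(∇u), φ⟩ = ∫_Ω λ_u · ∇φ`. -/
def detPairing (Ω : Set R2) (u : R2 → R2) (G : R2 → Matrix (Fin 2) (Fin 2) ℝ)
    (φ : R2 → ℝ) : ℝ :=
  ∫ x in Ω, ∑ j, lambdaVec u G x j * fderiv ℝ φ x (EuclideanSpace.single j 1)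

/-- `φ ∈ Lip₀(Ω)`: Lipschitz on `cl(Ω)` and vanishing on `∂Ω`. -/
def MemLip0 (Ω : Set R2) (φ : R2 → ℝ) : Prop :=
  (∃ L : ℝ≥0, LipschitzOnWith L φ (closure Ω)) ∧ ∀ p ∈ frontier Ω, φ p = 0

/-- Admissible test functions for the flat norm: Lipschitz constant `≤ L` on `cl(Ω)`,
vanishing on `Z`, and bounded by `1` on `cl(Ω)`. -/
def FlatAdmissible (Ω Z : Set R2) (L : ℝ≥0) (φ : R2 → ℝ) : Prop :=
  LipschitzOnWith L φ (closure Ω) ∧ (∀ p ∈ Z, φ p = 0) ∧ ∀ p ∈ closure Ω, |φ p| ≤ 1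

/-- Flat norm of a functional `F`, with vanishing condition on the set `Z`. -/
def flatNormOn (Ω Z : Set R2) (L : ℝ≥0) (F : (R2 → ℝ) → ℝ) : ℝ≥0∞ :=
  ⨆ φ ∈ {φ : R2 → ℝ | FlatAdmissible Ω Z L φ}, ENNReal.ofReal (F φ)

/-- Flat norm of a functional `F` on `Lip₀(Ω)`; `L = 2` gives `‖·‖_{flat,α}` (α = 1/2),
`L = 1` gives `‖·‖_flat`. -/
def flatNorm (Ω : Set R2) (L : ℝ≥0) (F : (R2 → ℝ) → ℝ) : ℝ≥0∞ :=
  flatNormOn Ω (frontier Ω) L F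

/-- `d̄_Ω(x,y) = min{|x−y|, dist(x,∂Ω) + dist(y,∂Ω)}`. -/
def dbar (Ω : Set R2) (x y : R2) : ℝ :=
  min (dist x y) (Metric.infDist x (frontier Ω) + Metric.infDist y (frontier Ω))

/-- Countably subadditive interior envelope `𝒜**(u,V)` (relative to `Ω`). -/
def envA (u : R2 → R2) (Ω V : Set R2) : ℝ≥0∞ :=
  sInf { a : ℝ≥0∞ | ∃ A : ℕ → Set R2,
    (∀ k, IsOpen (A k) ∧ A k ⊆ Ω) ∧ V ⊆ ⋃ k, A k ∧ a = ∑' k, relaxedArea u (A k) }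

/-- Property `(P_f)` for a finite family of pairs of points of `cl(Ω)`. -/
def SatisfiesPf (Ω : Set R2) {n : ℕ} (x y : Fin n → R2) : Prop :=
  (∀ k, (x k ∈ Ω ∧ y k ∈ frontier Ω ∧ dist (x k) (y k) = Metric.infDist (x k) (frontier Ω)) ∨
        (y k ∈ Ω ∧ x k ∈ frontier Ω ∧ dist (x k) (y k) = Metric.infDist (y k) (frontier Ω))) ∧
  ∀ i j, x i ∈ Ω → y j ∈ Ω → x i ≠ y j

/-- The points of the family `x, y` lying in `Ω` are distinct and three by three
not collinear. -/
def InteriorPointsGeneric (Ω : Set R2) {n : ℕ} (x y : Fin n → R2) : Prop :=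
  (∀ a b : Fin n ⊕ Fin n, Sum.elim x y a ∈ Ω → Sum.elim x y b ∈ Ω → a ≠ b →
    Sum.elim x y a ≠ Sum.elim x y b) ∧
  ∀ a b c : Fin n ⊕ Fin n, Sum.elim x y a ∈ Ω → Sum.elim x y b ∈ Ω → Sum.elim x y c ∈ Ω →
    a ≠ b → a ≠ c → b ≠ c →
    ¬ Collinear ℝ ({Sum.elim x y a, Sum.elim x y b, Sum.elim x y c} : Set R2)

/-- `ι(w₁,w₂) = (w₁,−w₂)`. -/
def conjPt (w : R2) : R2 := (WithLp.equiv 2 (Fin 2 → ℝ)).symm ![w 0, -(w 1)]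

/-- `u` is a (positive/negative) vortex around the points of the family lying in `Ω`:
the closed discs of radii `ρ` are contained in `Ω` and pairwise disjoint,
`u(z) = (z−x_i)/|z−x_i|` on `B_{ρ}(x_i)` and `u(z) = ι((z−y_j)/|z−y_j|)` on `B_{ρ}(y_j)`. -/
def VortexAt (Ω : Set R2) (u : R2 → R2) {n : ℕ} (x y : Fin n → R2)
    (ρ : Fin n ⊕ Fin n → ℝ) : Prop :=
  (∀ a, Sum.elim x y a ∈ Ω → Metric.closedBall (Sum.elim x y a) (ρ a) ⊆ Ω) ∧
  (∀ a b, a ≠ b → Sum.elim x y a ∈ Ω → Sum.elim x y b ∈ Ω →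
    Disjoint (Metric.closedBall (Sum.elim x y a) (ρ a))
      (Metric.closedBall (Sum.elim x y b) (ρ b))) ∧
  (∀ i, x i ∈ Ω → ∀ᵐ z ∂(volume.restrict (Metric.ball (x i) (ρ (Sum.inl i)))),
    u z = ‖z - x i‖⁻¹ • (z - x i)) ∧
  (∀ i, y i ∈ Ω → ∀ᵐ z ∂(volume.restrict (Metric.ball (y i) (ρ (Sum.inr i)))),
    u z = conjPt (‖z - y i‖⁻¹ • (z - y i)))

/-- The energy `E(I_P, I_D, τ)` of a partition `{I_Dᶜ, I_D}` of `I` and an injection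
`τ : I_D → I`. -/
def energy (Ω : Set R2) {n : ℕ} (x y : Fin n → R2) (ID : Finset (Fin n))
    (τ : Fin n → Fin n) : ℝ≥0∞ :=
  ((IDᶜ.filter fun k => x k ∈ Ω).card : ℝ≥0∞) +
  (((Finset.univ \ ID.image τ).filter fun j => y j ∈ Ω).card : ℝ≥0∞) +
  2 * ∑ k ∈ ID, μH[1] (segment ℝ (y (τ k)) (x k) ∩ Ω)

/-!
In complex notation, multiply `u` by `∏ a, ((z - q a) / |z - q a| * |z - p a| / (z - p a)) ^ d a`,
where the `p a` are the points `x i`, with charge `d a = 1`, and `y i`, with charge `d a = -1`.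
This map has modulus one and an integrable logarithmic derivative, a combination of angular forms,
so the product is again a sphere-valued Sobolev map. The flux of the angular form around `p`
against a Lipschitz function `φ` vanishing on `∂Ω` is computed in polar coordinates to be
`2π φ(p)`, so the multiplication moves every charge from `p a` to `q a`. As `q → p`, the phases
tend to `1` almost everywhere and the angular forms converge in `L¹`, whence the approximation
in `W^{1,1}`. Since lines are null sets, `q` can be taken in general position.
-/

/-! ### Weak directional derivatives -/

lemma integrable_smul_of_hasCompactSupport {X F : Type*} [TopologicalSpace X] [MeasurableSpace X]
    [OpensMeasurableSpace X] [NormedAddCommGroup F] [NormedSpace ℝ F] {μ : Measure X}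
    {φ : X → ℝ} {f : X → F} (hφ : Continuous φ) (hc : HasCompactSupport φ) (hf : Integrable f μ) :
    Integrable (fun x ↦ φ x • f x) μ := by
  obtain ⟨C, hC⟩ := hc.exists_bound_of_continuous hφ
  exact hf.bdd_smul C hφ.aestronglyMeasurable (.of_forall hC)

section WeakLineDeriv

variable {E F F' : Type*} [NormedAddCommGroup E] [NormedSpace ℝ E]
  [NormedAddCommGroup F] [NormedSpace ℝ F] [NormedAddCommGroup F'] [NormedSpace ℝ F']

/-- Test functions `φ ∈ C_c^∞(Ω)`, extended by zero to the whole space. -/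
structure IsTestFunction (Ω : Set E) (φ : E → ℝ) : Prop where
  contDiff : ContDiff ℝ (⊤ : ℕ∞) φ
  hasCompactSupport : HasCompactSupport φ
  tsupport_subset : tsupport φ ⊆ Ω

variable {Ω : Set E} {φ h : E → ℝ} {v : E}

lemma IsTestFunction.differentiable (hφ : IsTestFunction Ω φ) : Differentiable ℝ φ :=
  hφ.contDiff.differentiable (by simp)

lemma IsTestFunction.mul_contDiff (hφ : IsTestFunction Ω φ) (hh : ContDiff ℝ (⊤ : ℕ∞) h) :
    IsTestFunction Ω fun x ↦ φ x * h x where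
  contDiff := hφ.contDiff.mul hh
  hasCompactSupport := hφ.hasCompactSupport.mul_right
  tsupport_subset := tsupport_mul_subset_left.trans hφ.tsupport_subset

lemma IsTestFunction.continuous_fderiv_apply (hφ : IsTestFunction Ω φ) (v : E) :
    Continuous fun x ↦ fderiv ℝ φ x v :=
  (hφ.contDiff.continuous_fderiv (by simp)).clm_apply continuous_const

/-- `g` is the weak derivative of `f` in the direction `v`, tested against `C_c^∞(Ω)`. Integrals are
taken against `μ`, so that the same notion covers `μ = volume` and `μ = volume.restrict Ω`. -/
def HasWeakLineDeriv [MeasurableSpace E] (μ : Measure E) (Ω : Set E) (v : E) (f g : E → F) : Prop :=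
  ∀ φ, IsTestFunction Ω φ → ∫ x, fderiv ℝ φ x v • f x ∂μ = -∫ x, φ x • g x ∂μ

variable [MeasurableSpace E] {μ : Measure E} {f f₁ f₂ g g₁ g₂ : E → F}

lemma HasWeakLineDeriv.congr_ae (hfg : HasWeakLineDeriv μ Ω v f₁ g₁)
    (hf : f₁ =ᵐ[μ] f₂) (hg : g₁ =ᵐ[μ] g₂) : HasWeakLineDeriv μ Ω v f₂ g₂ := by
  intro φ hφ
  rw [← integral_congr_ae (hf.mono fun x hx ↦ congrArg (fderiv ℝ φ x v • ·) hx),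
    ← integral_congr_ae (hg.mono fun x hx ↦ congrArg (φ x • ·) hx)]
  exact hfg φ hφ

variable [BorelSpace E]

lemma IsTestFunction.integrable_smul (hφ : IsTestFunction Ω φ) (hf : Integrable f μ) :
    Integrable (fun x ↦ φ x • f x) μ :=
  integrable_smul_of_hasCompactSupport hφ.contDiff.continuous hφ.hasCompactSupport hf

lemma IsTestFunction.integrable_fderiv_smul (hφ : IsTestFunction Ω φ) (v : E)
    (hf : Integrable f μ) : Integrable (fun x ↦ fderiv ℝ φ x v • f x) μ :=
  integrable_smul_of_hasCompactSupport (hφ.continuous_fderiv_apply v)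
    (hφ.hasCompactSupport.fderiv_apply ℝ v) hf

namespace HasWeakLineDeriv

lemma add (h₁ : HasWeakLineDeriv μ Ω v f₁ g₁) (h₂ : HasWeakLineDeriv μ Ω v f₂ g₂)
    (hf₁ : Integrable f₁ μ) (hg₁ : Integrable g₁ μ) (hf₂ : Integrable f₂ μ)
    (hg₂ : Integrable g₂ μ) :
    HasWeakLineDeriv μ Ω v (fun x ↦ f₁ x + f₂ x) (fun x ↦ g₁ x + g₂ x) := by
  intro φ hφ
  simp only [smul_add]
  rw [integral_add (hφ.integrable_fderiv_smul v hf₁) (hφ.integrable_fderiv_smul v hf₂),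
    integral_add (hφ.integrable_smul hg₁) (hφ.integrable_smul hg₂), h₁ φ hφ, h₂ φ hφ, neg_add]

lemma clm_comp [CompleteSpace F] [CompleteSpace F'] (hfg : HasWeakLineDeriv μ Ω v f g)
    (hf : Integrable f μ) (hg : Integrable g μ) (L : F →L[ℝ] F') :
    HasWeakLineDeriv μ Ω v (fun x ↦ L (f x)) (fun x ↦ L (g x)) := by
  intro φ hφ
  simp only [← map_smul]
  rw [L.integral_comp_comm (hφ.integrable_fderiv_smul v hf),
    L.integral_comp_comm (hφ.integrable_smul hg), hfg φ hφ, map_neg]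

lemma smul_contDiff (hfg : HasWeakLineDeriv μ Ω v f g) (hf : Integrable f μ)
    (hg : Integrable g μ) (hh : ContDiff ℝ (⊤ : ℕ∞) h) :
    HasWeakLineDeriv μ Ω v (fun x ↦ h x • f x) (fun x ↦ h x • g x + fderiv ℝ h x v • f x) := by
  intro φ hφ
  have hφh := hφ.mul_contDiff hh
  have h_prod : ∀ x, fderiv ℝ (fun x ↦ φ x * h x) x v • f x =
      fderiv ℝ φ x v • h x • f x + φ x • fderiv ℝ h x v • f x := fun x ↦ by
    rw [fderiv_fun_mul hφ.differentiable.differentiableAt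
      (hh.differentiable (by simp)).differentiableAt]
    simp only [add_apply, smul_apply, smul_eq_mul]
    module
  have hi_deriv : Integrable (fun x ↦ φ x • fderiv ℝ h x v • f x) μ := by
    simp only [smul_smul]
    exact integrable_smul_of_hasCompactSupport
      (hφ.contDiff.continuous.mul ((hh.continuous_fderiv (by simp)).clm_apply continuous_const))
      hφ.hasCompactSupport.mul_right hf
  have hi_left : Integrable (fun x ↦ fderiv ℝ φ x v • h x • f x) μ := by
    refine ((hφh.integrable_fderiv_smul v hf).sub hi_deriv).congr (.of_forall fun x ↦ ?_)
    simp only [Pi.sub_apply, h_prod, add_sub_cancel_right]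
  have hi_right : Integrable (fun x ↦ φ x • h x • g x) μ := by
    simpa only [smul_smul] using hφh.integrable_smul hg
  have key := hfg _ hφh
  simp only [h_prod, mul_smul] at key
  rw [integral_add hi_left hi_deriv] at key
  simp only [smul_add]
  rw [integral_add hi_right hi_deriv, neg_add, ← key, add_neg_cancel_right]

lemma of_tendsto {ι : Type*} {l : Filter ι} [l.NeBot] [l.IsCountablyGenerated]
    {fs gs : ι → E → F} {bf bg : E → ℝ} (hfg : ∀ᶠ i in l, HasWeakLineDeriv μ Ω v (fs i) (gs i))
    (hfs : ∀ᶠ i in l, AEStronglyMeasurable (fs i) μ)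
    (hgs : ∀ᶠ i in l, AEStronglyMeasurable (gs i) μ)
    (hbf : Integrable bf μ) (hbg : Integrable bg μ)
    (hfs_le : ∀ᶠ i in l, ∀ᵐ x ∂μ, ‖fs i x‖ ≤ bf x)
    (hgs_le : ∀ᶠ i in l, ∀ᵐ x ∂μ, ‖gs i x‖ ≤ bg x)
    (hf : ∀ᵐ x ∂μ, Tendsto (fs · x) l (𝓝 (f x))) (hg : ∀ᵐ x ∂μ, Tendsto (gs · x) l (𝓝 (g x))) :
    HasWeakLineDeriv μ Ω v f g := by
  intro φ hφ
  have tendsto_integral_smul {ψ : E → ℝ} (hψ : Continuous ψ) (hψc : HasCompactSupport ψ)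
      {us : ι → E → F} {u : E → F} {b : E → ℝ} (hus : ∀ᶠ i in l, AEStronglyMeasurable (us i) μ)
      (hb : Integrable b μ) (hus_le : ∀ᶠ i in l, ∀ᵐ x ∂μ, ‖us i x‖ ≤ b x)
      (hu : ∀ᵐ x ∂μ, Tendsto (us · x) l (𝓝 (u x))) :
      Tendsto (fun i ↦ ∫ x, ψ x • us i x ∂μ) l (𝓝 (∫ x, ψ x • u x ∂μ)) := by
    refine tendsto_integral_filter_of_dominated_convergence (fun x ↦ ‖ψ x‖ • b x)
      (hus.mono fun i hi ↦ hψ.aestronglyMeasurable.smul hi) (hus_le.mono fun i hi ↦ ?_)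
      (integrable_smul_of_hasCompactSupport hψ.norm hψc.norm hb)
      (hu.mono fun x hx ↦ hx.const_smul _)
    filter_upwards [hi] with x hx
    rw [norm_smul, smul_eq_mul]
    gcongr
  have hl := tendsto_integral_smul (hφ.continuous_fderiv_apply v)
    (hφ.hasCompactSupport.fderiv_apply ℝ v) hfs hbf hfs_le hf
  have hr := tendsto_integral_smul hφ.contDiff.continuous hφ.hasCompactSupport hgs hbg hgs_le hg
  exact tendsto_nhds_unique (hl.congr' (hfg.mono fun i hi ↦ hi φ hφ)) hr.neg

end HasWeakLineDeriv

end WeakLineDeriv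

/-! ### Multiplication by normalised linear forms -/

lemma ae_sub_ne_zero {E : Type*} [AddGroup E] [MeasurableSpace E] {μ : Measure E}
    [NullSingletonClass μ] (p : E) : ∀ᵐ z ∂μ, z - p ≠ 0 :=
  (μ.ae_ne p).mono fun _ ↦ sub_ne_zero.2

section NormalizedForm

variable {E : Type*} [NormedAddCommGroup E] {δ : ℝ} {v w : E}

/-- A regularisation of the norm, smooth for `δ > 0` in inner product spaces; it is the norm itself
at `δ = 0`. -/
def softNorm (δ : ℝ) (w : E) : ℝ := √(‖w‖ ^ 2 + δ)

@[simp] lemma softNorm_zero (w : E) : softNorm 0 w = ‖w‖ := by simp [softNorm]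

lemma softNorm_nonneg (δ : ℝ) (w : E) : 0 ≤ softNorm δ w := Real.sqrt_nonneg _

lemma softNorm_pos (hδ : 0 < δ) (w : E) : 0 < softNorm δ w := by
  unfold softNorm; positivity

lemma norm_le_softNorm (hδ : 0 ≤ δ) (w : E) : ‖w‖ ≤ softNorm δ w :=
  Real.le_sqrt_of_sq_le (le_add_of_nonneg_right hδ)

lemma continuous_softNorm (w : E) : Continuous fun δ ↦ softNorm δ w := by
  unfold softNorm; fun_prop

variable [InnerProductSpace ℝ E]

lemma contDiff_softNorm (hδ : 0 < δ) : ContDiff ℝ (⊤ : ℕ∞) (softNorm δ : E → ℝ) :=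
  ((contDiff_norm_sq ℝ).add contDiff_const).sqrt fun _ ↦ by positivity

lemma fderiv_softNorm_apply (hδ : 0 < δ) (v w : E) :
    fderiv ℝ (softNorm δ) w v = (softNorm δ w)⁻¹ * inner ℝ w v := by
  have h := (((hasFDerivAt_id w).norm_sq.add_const δ).sqrt (by positivity)).fderiv
  change fderiv ℝ (fun y ↦ √(‖id y‖ ^ 2 + δ)) w v = _
  rw [h]
  simp only [id, softNorm, ContinuousLinearMap.comp_id, smul_apply, innerSL_apply_apply,
    nsmul_eq_mul, smul_eq_mul]
  push_cast
  ring

variable (l : E →L[ℝ] ℝ)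

/-- The linear form `l` evaluated at the normalised vector `w`, regularised as in `softNorm`. -/
def normalizedForm (δ : ℝ) (w : E) : ℝ := (softNorm δ w)⁻¹ * l w

/-- The derivative at `w`, in the direction `v`, of `normalizedForm l δ`. -/
def normalizedFormDeriv (δ : ℝ) (v w : E) : ℝ :=
  (softNorm δ w)⁻¹ * l v - (softNorm δ w)⁻¹ ^ 3 * inner ℝ w v * l w

lemma contDiff_normalizedForm (hδ : 0 < δ) : ContDiff ℝ (⊤ : ℕ∞) (normalizedForm l δ) :=
  ((contDiff_softNorm hδ).inv fun w ↦ (softNorm_pos hδ w).ne').mul l.contDiff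

lemma fderiv_normalizedForm_apply (hδ : 0 < δ) (v w : E) :
    fderiv ℝ (normalizedForm l δ) w v = normalizedFormDeriv l δ v w := by
  have h_diff : DifferentiableAt ℝ (softNorm δ) w :=
    (contDiff_softNorm hδ).differentiable (by simp) w
  have h_ne := (softNorm_pos hδ w).ne'
  have h := ((hasDerivAt_inv h_ne).comp_hasFDerivAt w h_diff.hasFDerivAt).mul l.hasFDerivAt
  change fderiv ℝ (Inv.inv ∘ softNorm δ * ⇑l) w v = _
  rw [h.fderiv]
  simp only [add_apply, smul_apply, smul_eq_mul, fderiv_softNorm_apply hδ, normalizedFormDeriv,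
    Function.comp_apply]
  ring

lemma abs_normalizedForm_le (hδ : 0 ≤ δ) (w : E) : |normalizedForm l δ w| ≤ ‖l‖ := by
  rw [normalizedForm, abs_mul, abs_inv, abs_of_nonneg (softNorm_nonneg δ w)]
  refine inv_mul_le_of_le_mul₀ (softNorm_nonneg δ w) (norm_nonneg l) ?_
  grw [← norm_le_softNorm hδ w, mul_comm]
  exact l.le_opNorm w

lemma abs_normalizedFormDeriv_le (hδ : 0 ≤ δ) (hw : w ≠ 0) :
    |normalizedFormDeriv l δ v w| ≤ 2 * ‖l‖ * ‖v‖ * ‖w‖⁻¹ := by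
  have hw₀ := norm_pos_iff.2 hw
  have hρ : (softNorm δ w)⁻¹ ≤ ‖w‖⁻¹ := inv_anti₀ hw₀ (norm_le_softNorm hδ w)
  have hρ₀ : 0 ≤ (softNorm δ w)⁻¹ := inv_nonneg.2 (softNorm_nonneg δ w)
  calc |normalizedFormDeriv l δ v w|
      ≤ (softNorm δ w)⁻¹ * |l v| + (softNorm δ w)⁻¹ ^ 3 * |inner ℝ w v| * |l w| := by
        refine (abs_sub _ _).trans_eq ?_
        rw [abs_mul, abs_mul, abs_mul, abs_of_nonneg hρ₀, abs_of_nonneg (pow_nonneg hρ₀ 3)]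
    _ ≤ ‖w‖⁻¹ * (‖l‖ * ‖v‖) + ‖w‖⁻¹ ^ 3 * (‖w‖ * ‖v‖) * (‖l‖ * ‖w‖) := by
        gcongr
        exacts [l.le_opNorm v, abs_real_inner_le_norm w v, l.le_opNorm w]
    _ = 2 * ‖l‖ * ‖v‖ * ‖w‖⁻¹ := by field_simp; ring

lemma tendsto_normalizedForm (hw : w ≠ 0) :
    Tendsto (fun δ ↦ normalizedForm l δ w) (𝓝 0) (𝓝 (normalizedForm l 0 w)) :=
  ((continuous_softNorm w).continuousAt.inv₀ (by simpa using hw)).mul continuousAt_const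

lemma tendsto_normalizedFormDeriv (v : E) (hw : w ≠ 0) :
    Tendsto (fun δ ↦ normalizedFormDeriv l δ v w) (𝓝 0) (𝓝 (normalizedFormDeriv l 0 v w)) := by
  have h := (continuous_softNorm w).continuousAt (x := 0) |>.inv₀ (by simpa using hw)
  exact (h.mul continuousAt_const).sub (((h.pow 3).mul continuousAt_const).mul continuousAt_const)

variable {F : Type*} [NormedAddCommGroup F] [NormedSpace ℝ F]
  [MeasurableSpace E] [BorelSpace E] {μ : Measure E} {Ω : Set E} {f g : E → F}

lemma measurable_normalizedForm (δ : ℝ) : Measurable (normalizedForm l δ) := by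
  unfold normalizedForm softNorm
  fun_prop

lemma measurable_normalizedFormDeriv (δ : ℝ) (v : E) : Measurable (normalizedFormDeriv l δ v) := by
  unfold normalizedFormDeriv softNorm
  have : Measurable fun w ↦ inner ℝ w v := (continuous_id.inner continuous_const).measurable
  fun_prop

variable {p : E} {C : ℝ}

lemma aestronglyMeasurable_normalizedForm (δ : ℝ) :
    AEStronglyMeasurable (fun z ↦ normalizedForm l δ (z - p)) μ :=
  ((measurable_normalizedForm l δ).comp (measurable_id.sub_const p)).aestronglyMeasurable

lemma aestronglyMeasurable_normalizedFormDeriv (δ : ℝ) :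
    AEStronglyMeasurable (fun z ↦ normalizedFormDeriv l δ v (z - p)) μ :=
  ((measurable_normalizedFormDeriv l δ v).comp (measurable_id.sub_const p)).aestronglyMeasurable

lemma integrable_normalizedForm_smul (hf : Integrable f μ) :
    Integrable (fun z ↦ normalizedForm l 0 (z - p) • f z) μ :=
  hf.bdd_smul ‖l‖ (aestronglyMeasurable_normalizedForm l 0)
    (.of_forall fun _ ↦ abs_normalizedForm_le l le_rfl _)

variable [NullSingletonClass μ]

lemma integrable_normalizedFormDeriv_smul (hf : AEStronglyMeasurable f μ)
    (hC : ∀ᵐ z ∂μ, ‖f z‖ ≤ C) (hp : Integrable (fun z ↦ ‖z - p‖⁻¹) μ) :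
    Integrable (fun z ↦ normalizedFormDeriv l 0 v (z - p) • f z) μ := by
  refine Integrable.smul_bdd ?_ C hf hC
  refine (hp.const_mul (2 * ‖l‖ * ‖v‖)).mono' (aestronglyMeasurable_normalizedFormDeriv l 0) ?_
  exact (ae_sub_ne_zero p).mono fun z hz ↦ abs_normalizedFormDeriv_le l le_rfl hz

lemma HasWeakLineDeriv.normalizedForm_smul
    (hfg : HasWeakLineDeriv μ Ω v f g) (hf : Integrable f μ) (hg : Integrable g μ)
    (hC : ∀ᵐ z ∂μ, ‖f z‖ ≤ C) (hp : Integrable (fun z ↦ ‖z - p‖⁻¹) μ) :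
    HasWeakLineDeriv μ Ω v (fun z ↦ normalizedForm l 0 (z - p) • f z)
      (fun z ↦ normalizedForm l 0 (z - p) • g z + normalizedFormDeriv l 0 v (z - p) • f z) := by
  have hm (δ : ℝ) := aestronglyMeasurable_normalizedForm (μ := μ) (p := p) l δ
  have hm' (δ : ℝ) := aestronglyMeasurable_normalizedFormDeriv (μ := μ) (p := p) (v := v) l δ
  have h_pos : ∀ᶠ δ : ℝ in 𝓝[>] 0, 0 < δ := self_mem_nhdsWithin
  refine of_tendsto (l := 𝓝[>] (0 : ℝ)) (fs := fun δ z ↦ normalizedForm l δ (z - p) • f z)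
    (gs := fun δ z ↦ normalizedForm l δ (z - p) • g z + normalizedFormDeriv l δ v (z - p) • f z)
    (bf := fun z ↦ ‖l‖ * ‖f z‖) (bg := fun z ↦ ‖l‖ * ‖g z‖ + 2 * ‖l‖ * ‖v‖ * ‖z - p‖⁻¹ * C)
    (h_pos.mono fun δ hδ ↦ ?_) (.of_forall fun δ ↦ (hm δ).smul hf.1)
    (.of_forall fun δ ↦ ((hm δ).smul hg.1).add ((hm' δ).smul hf.1))
    (hf.norm.const_mul _) ((hg.norm.const_mul _).add ((hp.const_mul _).mul_const C))
    (h_pos.mono fun δ hδ ↦ .of_forall fun z ↦ ?_) (h_pos.mono fun δ hδ ↦ ?_) ?_ ?_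
  · simpa only [fderiv_comp_sub, fderiv_normalizedForm_apply l hδ] using
      hfg.smul_contDiff hf hg (h := fun z ↦ normalizedForm l δ (z - p))
        ((contDiff_normalizedForm l hδ).comp (contDiff_id.sub contDiff_const))
  · rw [norm_smul]
    gcongr
    exact abs_normalizedForm_le l hδ.le _
  · filter_upwards [ae_sub_ne_zero p, hC] with z hz hfz
    refine (norm_add_le _ _).trans ?_
    rw [norm_smul, norm_smul]
    gcongr
    exacts [abs_normalizedForm_le l hδ.le _, abs_normalizedFormDeriv_le l hδ.le hz]
  · exact (ae_sub_ne_zero p).mono fun z hz ↦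
      ((tendsto_normalizedForm l hz).mono_left nhdsWithin_le_nhds).smul_const _
  · exact (ae_sub_ne_zero p).mono fun z hz ↦
      (((tendsto_normalizedForm l hz).mono_left nhdsWithin_le_nhds).smul_const _).add
      (((tendsto_normalizedFormDeriv l v hz).mono_left nhdsWithin_le_nhds).smul_const _)

end NormalizedForm

/-! ### Phases -/

section Phase

variable {E : Type*} [NormedAddCommGroup E] [NormedSpace ℝ E] [MeasurableSpace E]

/-- Multiplication by `V : Ω → S¹` is compatible with weak derivatives in the direction `v`, with
logarithmic derivative `i θ`; informally, `∂_v V = i θ V`. The Leibniz rule against unimodular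
weakly differentiable functions is taken as the definition, since it is what products of phases
inherit without any approximation argument. -/
structure IsPhase (μ : Measure E) (Ω : Set E) (v : E) (V : E → ℂ) (θ : E → ℝ) : Prop where
  aestronglyMeasurable : AEStronglyMeasurable V μ
  norm_eq_one : ∀ᵐ z ∂μ, ‖V z‖ = 1
  integrable : Integrable θ μ
  leibniz : ∀ {f g : E → ℂ}, Integrable f μ → Integrable g μ → (∀ᵐ z ∂μ, ‖f z‖ = 1) →
    HasWeakLineDeriv μ Ω v f g →
      HasWeakLineDeriv μ Ω v (fun z ↦ V z * f z) (fun z ↦ V z * (g z + Complex.I * θ z * f z))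

namespace IsPhase

variable {μ : Measure E} {Ω : Set E} {v : E} {V W : E → ℂ} {θ η : E → ℝ} {f g : E → ℂ}

lemma integrable_mul (hV : IsPhase μ Ω v V θ) (hf : Integrable f μ) :
    Integrable (fun z ↦ V z * f z) μ :=
  hf.bdd_mul hV.aestronglyMeasurable (hV.norm_eq_one.mono fun _ hz ↦ hz.le)

lemma norm_one_sub_le_two (hV : IsPhase μ Ω v V θ) : ∀ᵐ z ∂μ, ‖1 - V z‖ ≤ 2 := by
  filter_upwards [hV.norm_eq_one] with z hz
  calc ‖1 - V z‖ ≤ ‖(1 : ℂ)‖ + ‖V z‖ := norm_sub_le _ _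
    _ = 2 := by rw [hz, norm_one, one_add_one_eq_two]

lemma norm_mul_eq_one (hV : IsPhase μ Ω v V θ) (hf : ∀ᵐ z ∂μ, ‖f z‖ = 1) :
    ∀ᵐ z ∂μ, ‖V z * f z‖ = 1 := by
  filter_upwards [hV.norm_eq_one, hf] with z hz hfz
  rw [norm_mul, hz, hfz, one_mul]

lemma integrable_deriv (hV : IsPhase μ Ω v V θ) (hf : Integrable f μ)
    (hf₁ : ∀ᵐ z ∂μ, ‖f z‖ = 1) (hg : Integrable g μ) :
    Integrable (fun z ↦ V z * (g z + Complex.I * θ z * f z)) μ :=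
  hV.integrable_mul <| hg.add <|
    (hV.integrable.ofReal.const_mul Complex.I).mul_bdd hf.1 (hf₁.mono fun _ hz ↦ hz.le)

lemma one : IsPhase μ Ω v (fun _ ↦ 1) (fun _ ↦ 0) where
  aestronglyMeasurable := aestronglyMeasurable_const
  norm_eq_one := .of_forall fun _ ↦ norm_one
  integrable := integrable_zero E ℝ μ
  leibniz _ _ _ hfg := by simpa using hfg

lemma mul (hV : IsPhase μ Ω v V θ) (hW : IsPhase μ Ω v W η) :
    IsPhase μ Ω v (fun z ↦ V z * W z) (fun z ↦ θ z + η z) where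
  aestronglyMeasurable := hV.aestronglyMeasurable.mul hW.aestronglyMeasurable
  norm_eq_one := hV.norm_mul_eq_one hW.norm_eq_one
  integrable := hV.integrable.add hW.integrable
  leibniz hf hg hf₁ hfg := by
    have h := hV.leibniz (hW.integrable_mul hf) (hW.integrable_deriv hf hf₁ hg)
      (hW.norm_mul_eq_one hf₁) (hW.leibniz hf hg hf₁ hfg)
    refine h.congr_ae (.of_forall fun z ↦ ?_) (.of_forall fun z ↦ ?_)
    · ring
    · push_cast
      ring

lemma pow (hV : IsPhase μ Ω v V θ) (n : ℕ) :
    IsPhase μ Ω v (fun z ↦ V z ^ n) (fun z ↦ n * θ z) := by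
  induction n with
  | zero => simpa using one
  | succ n ih => simpa only [pow_succ, Nat.cast_succ, add_mul, one_mul] using ih.mul hV

lemma prod {ι : Type*} (s : Finset ι) {V : ι → E → ℂ} {θ : ι → E → ℝ}
    (h : ∀ i ∈ s, IsPhase μ Ω v (V i) (θ i)) :
    IsPhase μ Ω v (fun z ↦ ∏ i ∈ s, V i z) (fun z ↦ ∑ i ∈ s, θ i z) := by
  induction s using Finset.induction_on with
  | empty => simpa using one
  | insert a s ha ih =>
    simp only [Finset.prod_insert ha, Finset.sum_insert ha]
    exact (h a (s.mem_insert_self a)).mul (ih fun i hi ↦ h i (Finset.mem_insert_of_mem hi))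

variable [BorelSpace E]

/-- On unimodular functions inversion is complex conjugation, which commutes with weak
derivatives. -/
lemma inv (hV : IsPhase μ Ω v V θ) : IsPhase μ Ω v (fun z ↦ (V z)⁻¹) (fun z ↦ -θ z) where
  aestronglyMeasurable := hV.aestronglyMeasurable.aemeasurable.inv.aestronglyMeasurable
  norm_eq_one := hV.norm_eq_one.mono fun z hz ↦ by rw [norm_inv, hz, inv_one]
  integrable := hV.integrable.neg
  leibniz {f g} hf hg hf₁ hfg := by
    let conj : ℂ →L[ℝ] ℂ := Complex.conjCLE
    have hcf : Integrable (fun z ↦ conj (f z)) μ := conj.integrable_comp hf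
    have hcg : Integrable (fun z ↦ conj (g z)) μ := conj.integrable_comp hg
    have hcf₁ : ∀ᵐ z ∂μ, ‖conj (f z)‖ = 1 := hf₁.mono fun z hz ↦ (Complex.norm_conj _).trans hz
    have h := (hV.leibniz hcf hcg hcf₁ (hfg.clm_comp hf hg conj)).clm_comp
      (hV.integrable_mul hcf) (hV.integrable_deriv hcf hcf₁ hcg) conj
    have h_inv : ∀ᵐ z ∂μ, (V z)⁻¹ = starRingEnd ℂ (V z) :=
      hV.norm_eq_one.mono fun z hz ↦ Complex.inv_eq_conj hz
    refine h.congr_ae (h_inv.mono fun z hz ↦ ?_) (h_inv.mono fun z hz ↦ ?_)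
    · simp [conj, hz]
    · simp [conj, hz]

lemma zpow (hV : IsPhase μ Ω v V θ) (d : ℤ) :
    IsPhase μ Ω v (fun z ↦ V z ^ d) (fun z ↦ d * θ z) := by
  obtain ⟨n, rfl | rfl⟩ := d.eq_nat_or_neg
  · simpa using hV.pow n
  · simpa [zpow_neg] using (hV.pow n).inv

end IsPhase

end Phase

/-! ### Planar vortices -/

section Vortex

/-- The identification of `ℝ²` with `ℂ`. -/
def toComplex : R2 ≃ₗᵢ[ℝ] ℂ := Complex.orthonormalBasisOneI.repr.symm

@[simp] lemma re_toComplex (w : R2) : (toComplex w).re = w 0 := by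
  simp [toComplex]

@[simp] lemma im_toComplex (w : R2) : (toComplex w).im = w 1 := by
  simp [toComplex]

/-- The degree-one vortex `w ↦ w / |w|` at the origin, as a complex-valued map. -/
def vortex (w : R2) : ℂ := toComplex w / ‖w‖

/-- The derivative of the polar angle at `w` in the direction `v`, that is, `Im (v / w)`. -/
def angularForm (v w : R2) : ℝ := (toComplex v / toComplex w).im

lemma norm_vortex {w : R2} (hw : w ≠ 0) : ‖vortex w‖ = 1 := by
  simp [vortex, hw]

lemma continuousAt_vortex {w : R2} (hw : w ≠ 0) : ContinuousAt vortex w :=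
  toComplex.continuous.continuousAt.div
    (Complex.continuous_ofReal.comp continuous_norm).continuousAt (by simpa using hw)

lemma measurable_vortex : Measurable vortex :=
  toComplex.continuous.measurable.div (Complex.continuous_ofReal.comp continuous_norm).measurable

lemma abs_angularForm_le (v w : R2) : |angularForm v w| ≤ ‖v‖ * ‖w‖⁻¹ := by
  simpa [angularForm, div_eq_mul_inv] using Complex.abs_im_le_norm (toComplex v / toComplex w)

lemma measurable_angularForm (v : R2) : Measurable (angularForm v) :=
  Complex.measurable_im.comp (measurable_const.div toComplex.continuous.measurable)

lemma angularForm_eq (v w : R2) : angularForm v w = (v 1 * w 0 - v 0 * w 1) / ‖w‖ ^ 2 := by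
  rw [angularForm, Complex.div_im, re_toComplex, im_toComplex, re_toComplex, im_toComplex,
    Complex.normSq_eq_norm_sq, toComplex.norm_map]
  ring

variable {v w : R2}

lemma vortex_eq_normalizedForm (w : R2) :
    vortex w = normalizedForm (EuclideanSpace.proj 0) 0 w +
      normalizedForm (EuclideanSpace.proj 1) 0 w * Complex.I := by
  apply Complex.ext <;> simp [vortex, normalizedForm, div_eq_inv_mul, ← Complex.ofReal_inv]

lemma normalizedFormDeriv_eq_vortex_mul (hw : w ≠ 0) :
    (normalizedFormDeriv (EuclideanSpace.proj 0) 0 v w : ℂ) +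
      normalizedFormDeriv (EuclideanSpace.proj 1) 0 v w * Complex.I =
      vortex w * (Complex.I * angularForm v w) := by
  have hw₀ : ‖w‖ ≠ 0 := norm_ne_zero_iff.2 hw
  have hsq : ‖w‖ ^ 2 = w 0 ^ 2 + w 1 ^ 2 := by
    rw [EuclideanSpace.real_norm_sq_eq, Fin.sum_univ_two]
  simp only [vortex, normalizedFormDeriv, angularForm_eq, softNorm_zero, PiLp.proj_apply,
    PiLp.inner_apply, RCLike.inner_apply, Real.ringHom_apply, Fin.sum_univ_two]
  apply Complex.ext
  all_goals
    simp only [div_eq_inv_mul, ← Complex.ofReal_inv, Complex.add_re, Complex.add_im,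
      Complex.mul_re, Complex.mul_im, Complex.ofReal_re, Complex.ofReal_im, Complex.I_re,
      Complex.I_im, re_toComplex, im_toComplex]
    field_simp
    rw [hsq]
    ring

lemma isPhase_vortex {μ : Measure R2} [NullSingletonClass μ] {Ω : Set R2} {p : R2} (v : R2)
    (hp : Integrable (fun z ↦ ‖z - p‖⁻¹) μ) :
    IsPhase μ Ω v (fun z ↦ vortex (z - p)) (fun z ↦ angularForm v (z - p)) where
  aestronglyMeasurable := (measurable_vortex.comp (measurable_id.sub_const p)).aestronglyMeasurable
  norm_eq_one := (ae_sub_ne_zero p).mono fun z hz ↦ norm_vortex hz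
  integrable := (hp.const_mul ‖v‖).mono'
    ((measurable_angularForm v).comp (measurable_id.sub_const p)).aestronglyMeasurable
    (.of_forall fun z ↦ abs_angularForm_le v (z - p))
  leibniz {f g} hf hg hf₁ hfg := by
    let mulI : ℂ →L[ℝ] ℂ := ContinuousLinearMap.mul ℝ ℂ Complex.I
    have hIf : Integrable (fun z ↦ mulI (f z)) μ := mulI.integrable_comp hf
    have hIg : Integrable (fun z ↦ mulI (g z)) μ := mulI.integrable_comp hg
    have hf_le : ∀ᵐ z ∂μ, ‖f z‖ ≤ 1 := hf₁.mono fun _ hz ↦ hz.le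
    have hIf_le : ∀ᵐ z ∂μ, ‖mulI (f z)‖ ≤ 1 := hf_le.mono fun _ hz ↦ by simpa [mulI] using hz
    have h_re := hfg.normalizedForm_smul (EuclideanSpace.proj 0) hf hg hf_le hp
    have h_im := (hfg.clm_comp hf hg mulI).normalizedForm_smul (EuclideanSpace.proj 1)
      hIf hIg hIf_le hp
    have h := h_re.add h_im (integrable_normalizedForm_smul _ hf)
      ((integrable_normalizedForm_smul _ hg).add
        (integrable_normalizedFormDeriv_smul _ hf.1 hf_le hp))
      (integrable_normalizedForm_smul _ hIf)
      ((integrable_normalizedForm_smul _ hIg).add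
        (integrable_normalizedFormDeriv_smul _ hIf.1 hIf_le hp))
    refine h.congr_ae (.of_forall fun z ↦ ?_) ((ae_sub_ne_zero p).mono fun z hz ↦ ?_)
    · simp only [mulI, ContinuousLinearMap.mul_apply', Complex.real_smul, vortex_eq_normalizedForm]
      ring
    · have h_deriv := normalizedFormDeriv_eq_vortex_mul (v := v) hz
      simp only [mulI, ContinuousLinearMap.mul_apply', Complex.real_smul]
      rw [mul_add, ← mul_assoc (vortex _), ← h_deriv, vortex_eq_normalizedForm]
      ring

end Vortex

/-! ### Rotating sphere-valued maps by phases -/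

section Rotation

lemma hasWeakLineDeriv_complex_iff {E : Type*} [NormedAddCommGroup E] [NormedSpace ℝ E]
    [MeasurableSpace E] [BorelSpace E] {μ : Measure E} {Ω : Set E} {v : E} {f g : E → ℂ}
    (hf : Integrable f μ) (hg : Integrable g μ) :
    HasWeakLineDeriv μ Ω v f g ↔ HasWeakLineDeriv μ Ω v (fun x ↦ (f x).re) (fun x ↦ (g x).re) ∧
      HasWeakLineDeriv μ Ω v (fun x ↦ (f x).im) (fun x ↦ (g x).im) := by
  refine ⟨fun h ↦ ⟨h.clm_comp hf hg Complex.reCLM, h.clm_comp hf hg Complex.imCLM⟩, ?_⟩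
  rintro ⟨h_re, h_im⟩
  let mulI : ℝ →L[ℝ] ℂ := (ContinuousLinearMap.id ℝ ℝ).smulRight Complex.I
  have h := (h_re.clm_comp hf.re hg.re Complex.ofRealCLM).add (h_im.clm_comp hf.im hg.im mulI)
    (Complex.ofRealCLM.integrable_comp hf.re) (Complex.ofRealCLM.integrable_comp hg.re)
    (mulI.integrable_comp hf.im) (mulI.integrable_comp hg.im)
  exact h.congr_ae (.of_forall fun x ↦ by simp [mulI, Complex.re_add_im])
    (.of_forall fun x ↦ by simp [mulI, Complex.re_add_im])

/-- The `j`-th column of a real `2 × 2` matrix as a complex number: for a gradient, this is the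
partial derivative `∂_j` of the complex-valued map. -/
def complexCol (M : Matrix (Fin 2) (Fin 2) ℝ) (j : Fin 2) : ℂ :=
  toComplex (WithLp.toLp 2 fun i ↦ M i j)

@[simp] lemma re_complexCol (M : Matrix (Fin 2) (Fin 2) ℝ) (j : Fin 2) :
    (complexCol M j).re = M 0 j := by simp [complexCol]

@[simp] lemma im_complexCol (M : Matrix (Fin 2) (Fin 2) ℝ) (j : Fin 2) :
    (complexCol M j).im = M 1 j := by simp [complexCol]

variable {Ω : Set R2} {u : R2 → R2} {G : R2 → Matrix (Fin 2) (Fin 2) ℝ}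

lemma isWeakGradient_iff : IsWeakGradient Ω u G ↔ ∀ i j,
    HasWeakLineDeriv (volume.restrict Ω) Ω (EuclideanSpace.single j 1)
      (fun x ↦ u x i) (fun x ↦ G x i j) := by
  simp only [IsWeakGradient, HasWeakLineDeriv, smul_eq_mul, mul_comm (u _ _), mul_comm (G _ _ _)]
  exact ⟨fun h i j φ hφ ↦ h φ hφ.1 hφ.2 hφ.3 i j, fun h φ h₁ h₂ h₃ i j ↦ h i j φ ⟨h₁, h₂, h₃⟩⟩

lemma integrable_complexCol_iff {α : Type*} [MeasurableSpace α] {μ : Measure α}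
    {A : α → Matrix (Fin 2) (Fin 2) ℝ} {j : Fin 2} :
    Integrable (fun x ↦ complexCol (A x) j) μ ↔ ∀ i, Integrable (fun x ↦ A x i j) μ := by
  simp only [complexCol, toComplex.integrable_comp_iff]
  exact ⟨fun h i ↦ h.eval_piLp i, fun h ↦ .of_eval_piLp h⟩

lemma memW11_iff : MemW11 Ω u G ↔ IntegrableOn (fun x ↦ toComplex (u x)) Ω ∧
    ∀ j, IntegrableOn (fun x ↦ complexCol (G x) j) Ω ∧
      HasWeakLineDeriv (volume.restrict Ω) Ω (EuclideanSpace.single j 1)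
        (fun x ↦ toComplex (u x)) (fun x ↦ complexCol (G x) j) := by
  have h_grad (hu : IntegrableOn (fun x ↦ toComplex (u x)) Ω)
      (hG : ∀ j, IntegrableOn (fun x ↦ complexCol (G x) j) Ω) : IsWeakGradient Ω u G ↔
      ∀ j, HasWeakLineDeriv (volume.restrict Ω) Ω (EuclideanSpace.single j 1)
        (fun x ↦ toComplex (u x)) (fun x ↦ complexCol (G x) j) := by
    rw [isWeakGradient_iff, forall_comm]
    refine forall_congr' fun j ↦ ?_
    rw [hasWeakLineDeriv_complex_iff hu (hG j)]
    simp only [Fin.forall_fin_two, re_toComplex, im_toComplex, re_complexCol, im_complexCol]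
  have h_cols : (∀ i j, IntegrableOn (fun x ↦ G x i j) Ω) ↔
      ∀ j, IntegrableOn (fun x ↦ complexCol (G x) j) Ω := by
    rw [forall_comm]
    exact forall_congr' fun j ↦ integrable_complexCol_iff.symm
  have h_map : IntegrableOn u Ω ↔ IntegrableOn (fun x ↦ toComplex (u x)) Ω :=
    toComplex.integrable_comp_iff.symm
  rw [MemW11, h_map, h_cols, forall_and]
  exact and_congr_right fun hu ↦ and_congr_right fun hG ↦ h_grad hu hG

lemma lambdaVec_eq_im (x : R2) : lambdaVec u G x =
    ![-(1 / 2) * (starRingEnd ℂ (toComplex (u x)) * complexCol (G x) 1).im,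
      (1 / 2) * (starRingEnd ℂ (toComplex (u x)) * complexCol (G x) 0).im] := by
  ext j
  fin_cases j
  all_goals
    simp only [lambdaVec, Fin.zero_eta, Fin.mk_one, Matrix.cons_val_zero, Matrix.cons_val_one,
      Complex.mul_im, Complex.conj_re, Complex.conj_im, re_toComplex, im_toComplex,
      re_complexCol, im_complexCol]
    ring

/-- The product of the sphere-valued map `u` with the phase `V`, in complex notation. -/
def rotate (V : R2 → ℂ) (u : R2 → R2) (z : R2) : R2 := toComplex.symm (V z * toComplex (u z))

/-- The weak gradient of `rotate V u`, where `θ j` is the logarithmic derivative of `V` along the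
`j`-th coordinate and `G` is the weak gradient of `u`. -/
def rotateGradient (V : R2 → ℂ) (θ : Fin 2 → R2 → ℝ) (u : R2 → R2)
    (G : R2 → Matrix (Fin 2) (Fin 2) ℝ) (z : R2) : Matrix (Fin 2) (Fin 2) ℝ :=
  Matrix.of fun i j ↦
    toComplex.symm (V z * (complexCol (G z) j + Complex.I * θ j z * toComplex (u z))) i

@[simp] lemma toComplex_rotate (V : R2 → ℂ) (u : R2 → R2) (z : R2) :
    toComplex (rotate V u z) = V z * toComplex (u z) := by simp [rotate]

variable {V : R2 → ℂ} {θ : Fin 2 → R2 → ℝ}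

@[simp] lemma complexCol_rotateGradient (z : R2) (j : Fin 2) :
    complexCol (rotateGradient V θ u G z) j =
      V z * (complexCol (G z) j + Complex.I * θ j z * toComplex (u z)) := by
  simp [complexCol, rotateGradient]

lemma SphereValued.norm_toComplex (hS : SphereValued Ω u) :
    ∀ᵐ z ∂volume.restrict Ω, ‖toComplex (u z)‖ = 1 :=
  hS.mono fun z hz ↦ by rw [toComplex.norm_map, hz]

lemma lambdaVec_rotate {z : R2} (hV : ‖V z‖ = 1) (hu : ‖toComplex (u z)‖ = 1) :
    lambdaVec (rotate V u) (rotateGradient V θ u G) z =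
      lambdaVec u G z + (1 / 2 : ℝ) • ![-θ 1 z, θ 0 z] := by
  have key (j : Fin 2) : (starRingEnd ℂ (V z * toComplex (u z)) *
      (V z * (complexCol (G z) j + Complex.I * θ j z * toComplex (u z)))).im =
      (starRingEnd ℂ (toComplex (u z)) * complexCol (G z) j).im + θ j z := by
    have hV' : starRingEnd ℂ (V z) * V z = 1 := by rw [Complex.conj_mul', hV]; simp
    have hu' : starRingEnd ℂ (toComplex (u z)) * toComplex (u z) = 1 := by
      rw [Complex.conj_mul', hu]; simp
    have : starRingEnd ℂ (V z * toComplex (u z)) *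
        (V z * (complexCol (G z) j + Complex.I * θ j z * toComplex (u z))) =
        starRingEnd ℂ (toComplex (u z)) * complexCol (G z) j + θ j z * Complex.I := by
      rw [map_mul]
      linear_combination (starRingEnd ℂ (toComplex (u z)) * complexCol (G z) j +
        θ j z * Complex.I * (starRingEnd ℂ (toComplex (u z)) * toComplex (u z))) * hV' +
        θ j z * Complex.I * hu'
    rw [this]
    simp
  rw [lambdaVec_eq_im, lambdaVec_eq_im, toComplex_rotate, complexCol_rotateGradient,
    complexCol_rotateGradient, key, key]
  ext j
  fin_cases j
  all_goals
    simp only [Fin.zero_eta, Fin.mk_one, Matrix.cons_val_zero, Matrix.cons_val_one,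
      Pi.add_apply, Pi.smul_apply, smul_eq_mul]
    ring

lemma integrableOn_mul_fderiv (hΩ : IsOpen Ω) {a : R2 → ℝ} (ha : IntegrableOn a Ω) {φ : R2 → ℝ}
    (hφ : MemLip0 Ω φ) (v : R2) : IntegrableOn (fun z ↦ a z * fderiv ℝ φ z v) Ω := by
  obtain ⟨L, hL⟩ := hφ.1
  refine ha.mul_bdd (c := L * ‖v‖) (measurable_fderiv_apply_const ℝ φ v).aestronglyMeasurable ?_
  filter_upwards [ae_restrict_mem hΩ.measurableSet] with z hz
  refine (fderiv ℝ φ z).le_of_opNorm_le ?_ v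
  exact norm_fderiv_le_of_lipschitzOn ℝ (hΩ.mem_nhds hz) (hL.mono subset_closure)

lemma integrableOn_lambdaVec (hu : MemW11 Ω u G) (hS : SphereValued Ω u) (j : Fin 2) :
    IntegrableOn (fun z ↦ lambdaVec u G z j) Ω := by
  obtain ⟨hf, hg⟩ := memW11_iff.1 hu
  have h (j : Fin 2) :
      IntegrableOn (fun z ↦ (starRingEnd ℂ (toComplex (u z)) * complexCol (G z) j).im) Ω := by
    refine ((hg j).1.bdd_mul (c := 1) (Complex.continuous_conj.comp_aestronglyMeasurable hf.1)
      (hS.norm_toComplex.mono fun z hz ↦ ?_)).im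
    rw [Complex.norm_conj, hz]
  simp only [lambdaVec_eq_im]
  fin_cases j
  · exact (h 1).const_mul _
  · exact (h 0).const_mul _

lemma MemW11.rotate
    (hV : ∀ j, IsPhase (volume.restrict Ω) Ω (EuclideanSpace.single j 1) V (θ j))
    (hu : MemW11 Ω u G) (hS : SphereValued Ω u) :
    MemW11 Ω (rotate V u) (rotateGradient V θ u G) := by
  obtain ⟨hf, hg⟩ := memW11_iff.1 hu
  refine memW11_iff.2 ⟨?_, fun j ↦ ⟨?_, ?_⟩⟩
  · simpa only [toComplex_rotate, IntegrableOn] using (hV 0).integrable_mul hf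
  · simpa only [complexCol_rotateGradient, IntegrableOn] using
      (hV j).integrable_deriv hf hS.norm_toComplex (hg j).1
  · simpa only [toComplex_rotate, complexCol_rotateGradient] using
      (hV j).leibniz hf (hg j).1 hS.norm_toComplex (hg j).2

lemma SphereValued.rotate
    (hV : ∀ j, IsPhase (volume.restrict Ω) Ω (EuclideanSpace.single j 1) V (θ j))
    (hS : SphereValued Ω u) : SphereValued Ω (rotate V u) := by
  filter_upwards [(hV 0).norm_mul_eq_one hS.norm_toComplex] with z hz
  rwa [← toComplex.norm_map, toComplex_rotate]

lemma detPairing_rotate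
    (hV : ∀ j, IsPhase (volume.restrict Ω) Ω (EuclideanSpace.single j 1) V (θ j))
    (hΩ : IsOpen Ω) (hu : MemW11 Ω u G) (hS : SphereValued Ω u) {φ : R2 → ℝ} (hφ : MemLip0 Ω φ) :
    detPairing Ω (rotate V u) (rotateGradient V θ u G) φ = detPairing Ω u G φ +
      (1 / 2) * ∫ z in Ω, (θ 0 z * fderiv ℝ φ z (EuclideanSpace.single 1 1) -
        θ 1 z * fderiv ℝ φ z (EuclideanSpace.single 0 1)) := by
  have h_lam (j : Fin 2) := integrableOn_mul_fderiv hΩ (integrableOn_lambdaVec hu hS j) hφ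
    (EuclideanSpace.single j 1)
  have h_shift : IntegrableOn (fun z ↦ θ 0 z * fderiv ℝ φ z (EuclideanSpace.single 1 1) -
      θ 1 z * fderiv ℝ φ z (EuclideanSpace.single 0 1)) Ω :=
    (integrableOn_mul_fderiv hΩ (hV 0).integrable hφ _).sub
      (integrableOn_mul_fderiv hΩ (hV 1).integrable hφ _)
  rw [detPairing, detPairing, ← integral_const_mul,
    ← integral_add (integrable_finsetSum _ fun j _ ↦ h_lam j) (h_shift.const_mul _)]
  refine integral_congr_ae ?_
  filter_upwards [(hV 0).norm_eq_one, hS.norm_toComplex] with z hVz huz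
  rw [lambdaVec_rotate hVz huz]
  simp only [Fin.sum_univ_two, Pi.add_apply, Pi.smul_apply, smul_eq_mul, Matrix.cons_val_zero,
    Matrix.cons_val_one]
  ring

end Rotation

/-! ### Polar coordinates -/

lemma lineDeriv_smul_eq_deriv {E : Type*} [NormedAddCommGroup E] [NormedSpace ℝ E]
    {ψ : E → ℝ} {r : ℝ} {ω : E} :
    lineDeriv ℝ ψ (r • ω) ω = deriv (fun s ↦ ψ (s • ω)) r := by
  simp only [lineDeriv, ← add_smul]
  simpa using deriv_comp_const_add (f := fun s : ℝ ↦ ψ (s • ω)) r 0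

section Polar

variable {E : Type*} [NormedAddCommGroup E] [NormedSpace ℝ E] [FiniteDimensional ℝ E]
  [MeasurableSpace E] [BorelSpace E] (μ : Measure E) [μ.IsAddHaarMeasure]

local notation "dim" => Module.finrank ℝ

lemma integral_volumeIoiPow {F : Type*} [NormedAddCommGroup F] [NormedSpace ℝ F] (n : ℕ)
    (f : ℝ → F) :
    ∫ r : Ioi (0 : ℝ), f r ∂Measure.volumeIoiPow n = ∫ r in Ioi (0 : ℝ), r ^ n • f r := by
  simp only [Measure.volumeIoiPow, ENNReal.ofReal]
  rw [integral_withDensity_eq_integral_smul (by fun_prop),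
    integral_subtype_comap measurableSet_Ioi fun r ↦ Real.toNNReal (r ^ n) • f r]
  refine setIntegral_congr_fun measurableSet_Ioi fun r hr ↦ ?_
  rw [NNReal.smul_def, Real.coe_toNNReal _ (pow_nonneg (le_of_lt hr) _)]

lemma integral_eq_integral_toSphere [Nontrivial E] {F : Type*} [NormedAddCommGroup F]
    [NormedSpace ℝ F] {f : E → F} (hf : Integrable f μ) :
    ∫ z, f z ∂μ =
      ∫ ω, (∫ r in Ioi (0 : ℝ), r ^ (dim E - 1) • f (r • (ω : E))) ∂μ.toSphere := by
  let g : sphere (0 : E) 1 × Ioi (0 : ℝ) → F := fun ωr ↦ f ((homeomorphUnitSphereProd E).symm ωr)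
  have h_polar := μ.measurePreserving_homeomorphUnitSphereProd
  have h_emb := (homeomorphUnitSphereProd E).measurableEmbedding
  have h_comp : g ∘ homeomorphUnitSphereProd E = f ∘ (↑) := by
    ext z
    simp only [g, Function.comp_apply, Homeomorph.symm_apply_apply]
  have hg : Integrable g (μ.toSphere.prod (.volumeIoiPow (dim E - 1))) := by
    rw [← h_polar.integrable_comp_emb h_emb, h_comp,
      ← integrableOn_iff_comap_subtypeVal (measurableSet_singleton _).compl]
    exact hf.integrableOn
  calc ∫ z, f z ∂μ = ∫ z : ({0}ᶜ : Set E), f z ∂μ.comap (↑) := by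
        rw [integral_subtype_comap (measurableSet_singleton _).compl f, restrict_compl_singleton]
    _ = ∫ ωr, g ωr ∂μ.toSphere.prod (.volumeIoiPow (dim E - 1)) := by
        rw [← h_polar.integral_comp h_emb]
        exact congrArg (fun h ↦ ∫ z, h z ∂_) h_comp.symm
    _ = ∫ ω, ∫ r : Ioi (0 : ℝ), f (r.1 • ω.1) ∂.volumeIoiPow (dim E - 1) ∂μ.toSphere :=
        integral_prod g hg
    _ = _ :=
        integral_congr_ae (.of_forall fun ω ↦ integral_volumeIoiPow _ fun r ↦ f (r • ω.1))

lemma integral_Ioi_deriv_of_lipschitz {L : ℝ≥0} {g : ℝ → ℝ} (hg : LipschitzWith L g)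
    (hgc : HasCompactSupport g) (a : ℝ) : ∫ r in Ioi a, deriv g r = -g a := by
  obtain ⟨R, haR, hR⟩ : ∃ R, a ≤ R ∧ ∀ r, R ≤ r → r ∉ tsupport g := by
    obtain ⟨R, hR⟩ := hgc.isCompact.bddAbove
    exact ⟨max a (R + 1), le_max_left _ _, fun r hr hrg ↦ by
      linarith [hR hrg, le_max_right a (R + 1)]⟩
  calc ∫ r in Ioi a, deriv g r = ∫ r in a..R, deriv g r := by
        rw [intervalIntegral.integral_of_le haR]
        refine setIntegral_eq_of_subset_of_forall_sdiff_eq_zero measurableSet_Ioi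
          Ioc_subset_Ioi_self fun r hr ↦ ?_
        have hRr : R ≤ r := le_of_lt (not_le.1 fun h ↦ hr.2 ⟨hr.1, h⟩)
        exact image_eq_zero_of_notMem_tsupport fun h ↦ hR r hRr (tsupport_deriv_subset h)
    _ = g R - g a := hg.lipschitzOnWith.absolutelyContinuousOnInterval.integral_deriv_eq_sub
    _ = -g a := by rw [image_eq_zero_of_notMem_tsupport (hR R le_rfl), zero_sub]

variable {μ} [Nontrivial E] {ψ : E → ℝ} {L : ℝ≥0}

lemma integrable_fderiv_self_div_norm_pow (hψ : LipschitzWith L ψ) (hψc : HasCompactSupport ψ) :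
    Integrable (fun z ↦ fderiv ℝ ψ z z / ‖z‖ ^ dim E) μ := by
  have h_dim : 1 ≤ dim E := Module.finrank_pos
  have h_decay (z : E) :
      ‖fderiv ℝ ψ z z / ‖z‖ ^ dim E‖ ≤ L * ‖z‖ ^ (-((dim E - 1 : ℕ) : ℝ)) := by
    rcases eq_or_ne z 0 with rfl | hz
    · rw [map_zero, zero_div, norm_zero]
      positivity
    have h_fderiv : ‖fderiv ℝ ψ z z‖ ≤ L * ‖z‖ :=
      (fderiv ℝ ψ z).le_of_opNorm_le (norm_fderiv_le_of_lipschitz ℝ hψ) z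
    rw [norm_div, norm_pow, norm_norm, Real.rpow_neg (norm_nonneg z), Real.rpow_natCast,
      ← div_eq_mul_inv, div_le_div_iff₀ (by positivity) (by positivity)]
    calc ‖fderiv ℝ ψ z z‖ * ‖z‖ ^ (dim E - 1) ≤ L * ‖z‖ * ‖z‖ ^ (dim E - 1) := by gcongr
      _ = L * ‖z‖ ^ dim E := by rw [mul_assoc, mul_pow_sub_one (by omega)]
  have h_meas : Measurable fun z ↦ fderiv ℝ ψ z z / ‖z‖ ^ dim E :=
    (isBoundedBilinearMap_apply.continuous.measurable.comp
      ((measurable_fderiv ℝ ψ).prodMk measurable_id)).div (by fun_prop)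
  have h_loc := locallyIntegrable_of_norm_le_rpow (μ := μ) h_dim
    (by exact_mod_cast Nat.sub_lt h_dim one_pos) (.of_forall h_decay) h_meas.aestronglyMeasurable
  refine (integrableOn_iff_integrable_of_support_subset fun z hz ↦ ?_).1
    (h_loc.integrableOn_isCompact hψc.isCompact)
  by_contra hzψ
  exact hz (by simp [fderiv_of_notMem_tsupport ℝ hzψ])

lemma integral_fderiv_self_div_norm_pow (hψ : LipschitzWith L ψ) (hψc : HasCompactSupport ψ) :
    ∫ z, fderiv ℝ ψ z z / ‖z‖ ^ dim E ∂μ = -(dim E * μ.real (ball 0 1) * ψ 0) := by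
  have h_ae : (fun z ↦ fderiv ℝ ψ z z / ‖z‖ ^ dim E) =ᵐ[μ]
      fun z ↦ lineDeriv ℝ ψ z z / ‖z‖ ^ dim E :=
    hψ.ae_differentiableAt.mono fun z hz ↦ by simp only [hz.lineDeriv_eq_fderiv]
  have h_ray (ω : sphere (0 : E) 1) :
      ∫ r in Ioi (0 : ℝ), r ^ (dim E - 1) •
        (lineDeriv ℝ ψ (r • (ω : E)) (r • (ω : E)) / ‖r • (ω : E)‖ ^ dim E) = -ψ 0 := by
    have hω : ‖(ω : E)‖ = 1 := norm_eq_of_mem_sphere ω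
    have h_emb : Topology.IsClosedEmbedding fun s : ℝ ↦ s • (ω : E) :=
      isClosedEmbedding_smul_left (ne_zero_of_mem_unit_sphere ω)
    have h_lip : LipschitzWith L fun s : ℝ ↦ ψ (s • (ω : E)) := by
      refine LipschitzWith.of_dist_le_mul fun s t ↦ (hψ.dist_le_mul _ _).trans_eq ?_
      rw [dist_eq_norm, ← sub_smul, norm_smul, hω, mul_one, dist_eq_norm]
    calc _ = ∫ r in Ioi (0 : ℝ), deriv (fun s ↦ ψ (s • (ω : E))) r := by
          refine setIntegral_congr_fun measurableSet_Ioi fun r (hr : 0 < r) ↦ ?_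
          have h_pow : r ^ dim E = r * r ^ (dim E - 1) :=
            (mul_pow_sub_one Module.finrank_pos.ne' r).symm
          simp only [lineDeriv_smul, lineDeriv_smul_eq_deriv, norm_smul, hω, mul_one, smul_eq_mul,
            Real.norm_of_nonneg hr.le, h_pow]
          field_simp
      _ = -ψ 0 := by
          simpa using integral_Ioi_deriv_of_lipschitz h_lip (hψc.comp_isClosedEmbedding h_emb) 0
  rw [integral_congr_ae h_ae,
    integral_eq_integral_toSphere μ ((integrable_fderiv_self_div_norm_pow hψ hψc).congr h_ae)]
  simp_rw [h_ray, integral_const, μ.toSphere_real_apply_univ, smul_eq_mul, mul_neg]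

end Polar

/-! ### Extension by zero and the flux of a vortex -/

lemma inter_frontier_nonempty_of_isPreconnected {X : Type*} [TopologicalSpace X] {s t : Set X}
    (ht : IsPreconnected t) (hts : (t ∩ s).Nonempty) (hts' : (t ∩ sᶜ).Nonempty) :
    (t ∩ frontier s).Nonempty := by
  by_contra! h
  have h_cover : t ⊆ interior s ∪ (closure s)ᶜ := fun x hx ↦ by
    by_contra hx'
    rw [mem_union, not_or, notMem_compl_iff] at hx'
    exact eq_empty_iff_forall_notMem.1 h x ⟨hx, hx'.2, hx'.1⟩
  obtain ⟨x, hxt, hxs⟩ := hts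
  obtain ⟨y, hyt, hys⟩ := hts'
  obtain ⟨z, -, hz, hz'⟩ := ht _ _ isOpen_interior isClosed_closure.isOpen_compl h_cover
    ⟨x, hxt, (h_cover hxt).resolve_right fun hx ↦ hx (subset_closure hxs)⟩
    ⟨y, hyt, (h_cover hyt).resolve_left fun hy ↦ hys (interior_subset hy)⟩
  exact hz' (subset_closure (interior_subset hz))

lemma lipschitzWith_indicator {E F : Type*} [NormedAddCommGroup E] [NormedSpace ℝ E]
    [NormedAddCommGroup F] {s : Set E} {f : E → F} {L : ℝ≥0}
    (hf : LipschitzOnWith L f (closure s)) (hf₀ : ∀ x ∈ frontier s, f x = 0) :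
    LipschitzWith L (s.indicator f) := by
  have norm_le {x y : E} (hx : x ∈ s) (hy : y ∉ s) : ‖f x‖ ≤ L * dist x y := by
    obtain ⟨w, hw, hws⟩ := inter_frontier_nonempty_of_isPreconnected
      (convex_segment (𝕜 := ℝ) x y).isPreconnected
      ⟨x, left_mem_segment ℝ x y, hx⟩ ⟨y, right_mem_segment ℝ x y, hy⟩
    calc ‖f x‖ = dist (f x) (f w) := by rw [hf₀ w hws, dist_zero_right]
      _ ≤ L * dist x w := hf.dist_le_mul x (subset_closure hx) w (frontier_subset_closure hws)
      _ ≤ L * dist x y := by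
        gcongr
        linarith [dist_add_dist_of_mem_segment hw, dist_nonneg (x := w) (y := y)]
  refine LipschitzWith.of_dist_le_mul fun x y ↦ ?_
  by_cases hx : x ∈ s <;> by_cases hy : y ∈ s
  · simpa only [hx, hy, indicator_of_mem] using
      hf.dist_le_mul x (subset_closure hx) y (subset_closure hy)
  · simpa only [hx, hy, indicator_of_mem, indicator_of_notMem, not_false_eq_true,
      dist_zero_right] using norm_le hx hy
  · simpa only [hx, hy, indicator_of_mem, indicator_of_notMem, not_false_eq_true,
      dist_zero_left, dist_comm x y] using norm_le hy hx
  · simp only [hx, hy, indicator_of_notMem, not_false_eq_true, dist_self]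
    positivity

lemma ae_fderiv_eq_zero_of_eq_zero {E : Type*} [NormedAddCommGroup E] [NormedSpace ℝ E]
    [FiniteDimensional ℝ E] [MeasurableSpace E] [BorelSpace E] {μ : Measure E}
    [μ.IsAddHaarMeasure] {ψ : E → ℝ} {L : ℝ≥0} (hψ : LipschitzWith L ψ) :
    ∀ᵐ z ∂μ, ψ z = 0 → fderiv ℝ ψ z = 0 := by
  have h_abs : LipschitzWith L fun z ↦ |ψ z| := by
    simpa only [one_mul, Function.comp_def, Real.norm_eq_abs] using
      (lipschitzWith_one_norm (E := ℝ)).comp hψ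
  filter_upwards [h_abs.ae_differentiableAt] with z hz hψz
  have h_min : IsLocalMin (fun w ↦ |ψ w|) z := .of_forall fun w ↦ by
    simp only [hψz, abs_zero, abs_nonneg]
  have h_fderiv : HasFDerivAt (fun w ↦ |ψ w|) (0 : E →L[ℝ] ℝ) z :=
    h_min.fderiv_eq_zero ▸ hz.hasFDerivAt
  rw [hasFDerivAt_iff_isLittleO_nhds_zero] at h_fderiv
  refine HasFDerivAt.fderiv (hasFDerivAt_iff_isLittleO_nhds_zero.2 ?_)
  simp only [hψz, abs_zero, zero_apply, sub_zero] at h_fderiv ⊢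
  exact h_fderiv.of_norm_left

lemma angularForm_single_mul_sub (A : R2 →L[ℝ] ℝ) (w : R2) :
    angularForm (EuclideanSpace.single 0 1) w * A (EuclideanSpace.single 1 1) -
      angularForm (EuclideanSpace.single 1 1) w * A (EuclideanSpace.single 0 1) =
      -(A w / ‖w‖ ^ 2) := by
  have hw : w = w 0 • EuclideanSpace.single 0 1 + w 1 • EuclideanSpace.single 1 1 := by
    ext j
    fin_cases j <;> simp
  conv_rhs => rw [hw, map_add, map_smul, map_smul, ← hw]
  simp only [angularForm_eq, ne_eq, one_ne_zero, zero_ne_one, not_false_eq_true,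
    PiLp.single_eq_of_ne, PiLp.single_eq_same, zero_mul, one_mul, zero_sub, sub_zero, smul_eq_mul]
  ring

lemma integral_fderiv_sub_div_norm_sq {ψ : R2 → ℝ} {L : ℝ≥0} (hψ : LipschitzWith L ψ)
    (hψc : HasCompactSupport ψ) (p : R2) :
    ∫ z, fderiv ℝ ψ z (z - p) / ‖z - p‖ ^ 2 = -(2 * Real.pi * ψ p) := by
  have h_lip : LipschitzWith L fun z ↦ ψ (z + p) := by
    simpa only [mul_one, Function.comp_def] using hψ.comp (isometry_add_right p).lipschitz
  have h_supp : HasCompactSupport fun z ↦ ψ (z + p) :=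
    hψc.comp_homeomorph (Homeomorph.addRight p)
  have h_flux := integral_fderiv_self_div_norm_pow (μ := volume) h_lip h_supp
  rw [← integral_add_right_eq_self _ p]
  simpa [fderiv_comp_add_right, measureReal_def, EuclideanSpace.volume_ball_fin_two, mul_assoc,
    Real.pi_nonneg]
    using h_flux

lemma MemLip0.indicator_eq {Ω : Set R2} {φ : R2 → ℝ} (hφ : MemLip0 Ω φ) {p : R2}
    (hp : p ∈ closure Ω) : Ω.indicator φ p = φ p := by
  by_cases hpΩ : p ∈ Ω
  · exact indicator_of_mem hpΩ φ
  · rw [indicator_of_notMem hpΩ, hφ.2 p ⟨hp, fun h ↦ hpΩ (interior_subset h)⟩]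

lemma ae_indicator_fderiv_eq {Ω : Set R2} (hΩ : IsOpen Ω) {φ : R2 → ℝ} (hφ : MemLip0 Ω φ) :
    ∀ᵐ z, Ω.indicator (fderiv ℝ φ) z = fderiv ℝ (Ω.indicator φ) z := by
  obtain ⟨⟨L, hL⟩, hφ₀⟩ := hφ
  filter_upwards [ae_fderiv_eq_zero_of_eq_zero (lipschitzWith_indicator hL hφ₀)] with z hz
  by_cases hzΩ : z ∈ Ω
  · rw [indicator_of_mem hzΩ]
    exact ((eqOn_indicator.eventuallyEq_of_mem (hΩ.mem_nhds hzΩ)).fderiv_eq).symm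
  · rw [indicator_of_notMem hzΩ, hz (indicator_of_notMem hzΩ φ)]

lemma half_mul_integral_angularForm {Ω : Set R2} (hΩ : IsOpen Ω) (hΩb : Bornology.IsBounded Ω)
    {φ : R2 → ℝ} (hφ : MemLip0 Ω φ) {p : R2} (hp : p ∈ closure Ω) :
    (1 / 2) * ∫ z in Ω,
      (angularForm (EuclideanSpace.single 0 1) (z - p) * fderiv ℝ φ z (EuclideanSpace.single 1 1) -
        angularForm (EuclideanSpace.single 1 1) (z - p) *
          fderiv ℝ φ z (EuclideanSpace.single 0 1)) =
      Real.pi * φ p := by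
  obtain ⟨L, hL⟩ := hφ.1
  have h_supp : HasCompactSupport (Ω.indicator φ) :=
    .intro hΩb.isCompact_closure fun z hz ↦ indicator_of_notMem (fun h ↦ hz (subset_closure h)) φ
  have h_flux := integral_fderiv_sub_div_norm_sq (lipschitzWith_indicator hL hφ.2) h_supp p
  have h_extend : ∫ z in Ω, fderiv ℝ φ z (z - p) / ‖z - p‖ ^ 2 =
      ∫ z, fderiv ℝ (Ω.indicator φ) z (z - p) / ‖z - p‖ ^ 2 := by
    rw [← integral_indicator hΩ.measurableSet]
    refine integral_congr_ae ((ae_indicator_fderiv_eq hΩ hφ).mono fun z hz ↦ ?_)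
    simp only [← hz]
    by_cases hzΩ : z ∈ Ω <;> simp [hzΩ]
  simp only [angularForm_single_mul_sub, integral_neg, h_extend, h_flux, hφ.indicator_eq hp]
  ring

/-! ### Displacement of vortices -/

section Displacement

lemma tendsto_integral_norm_sub_comp_sub {E F : Type*} [NormedAddCommGroup E] [NormedSpace ℝ E]
    [FiniteDimensional ℝ E] [MeasurableSpace E] [BorelSpace E] {μ : Measure E}
    [μ.IsAddHaarMeasure] [NormedAddCommGroup F] {f : E → F} (hf : Integrable f μ) (p : E) :
    Tendsto (fun q ↦ ∫ z, ‖f (z - q) - f (z - p)‖ ∂μ) (𝓝 p) (𝓝 0) := by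
  let g : C(E, C(E, E)) := ContinuousMap.curry ⟨fun qz ↦ qz.2 - qz.1, by fun_prop⟩
  have hg (q : E) : MeasurePreserving (g q) μ μ := measurePreserving_sub_right μ q
  have hf' : MemLp f 1 μ := memLp_one_iff_integrable.2 hf
  have h_cont : Continuous fun q ↦ Lp.compMeasurePreserving (g q) (hg q) (hf'.toLp f) :=
    continuous_const.compMeasurePreservingLp g.continuous hg ENNReal.one_ne_top
  have h_norm : Tendsto (fun q ↦ ‖Lp.compMeasurePreserving (g q) (hg q) (hf'.toLp f) -
      Lp.compMeasurePreserving (g p) (hg p) (hf'.toLp f)‖) (𝓝 p) (𝓝 0) :=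
    tendsto_iff_norm_sub_tendsto_zero.1 (h_cont.tendsto p)
  refine h_norm.congr fun q ↦ ?_
  rw [Lp.toLp_compMeasurePreserving, Lp.toLp_compMeasurePreserving, ← MemLp.toLp_sub,
    L1.norm_eq_integral_norm]
  exact integral_congr_ae ((MemLp.coeFn_toLp _).fun_comp norm)

lemma integrableOn_norm_sub_inv {E : Type*} [NormedAddCommGroup E] [NormedSpace ℝ E]
    [FiniteDimensional ℝ E] [MeasurableSpace E] [BorelSpace E] {μ : Measure E}
    [μ.IsAddHaarMeasure] (hE : 1 < Module.finrank ℝ E) {s : Set E} (hs : Bornology.IsBounded s)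
    (p : E) : IntegrableOn (fun z ↦ ‖z - p‖⁻¹) s μ := by
  have h_loc : LocallyIntegrable (fun z : E ↦ ‖z‖⁻¹) μ :=
    locallyIntegrable_of_norm_le_rpow (C := 1) (α := 1) hE.le (by exact_mod_cast hE)
      (.of_forall fun z ↦ by simp [Real.rpow_neg_one]) (by fun_prop)
  obtain ⟨R, hR⟩ := hs.subset_closedBall p
  have h_ball := h_loc.integrableOn_isCompact (isCompact_closedBall 0 R)
  rw [← (measurePreserving_sub_right μ p).integrableOn_comp_preimage
    (MeasurableEquiv.subRight p).measurableEmbedding] at h_ball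
  exact h_ball.mono_set fun z hz ↦ by simpa [dist_eq_norm] using hR hz

variable {Ω : Set R2}

lemma integrableOn_angularForm (hΩ : Bornology.IsBounded Ω) (v p : R2) :
    IntegrableOn (fun z ↦ angularForm v (z - p)) Ω :=
  (isPhase_vortex (Ω := Ω) v (integrableOn_norm_sub_inv (by simp) hΩ p)).integrable

lemma tendsto_integral_abs_angularForm_sub (hΩo : IsOpen Ω) (hΩ : Bornology.IsBounded Ω)
    (v p : R2) :
    Tendsto (fun q ↦ ∫ z in Ω, |angularForm v (z - q) - angularForm v (z - p)|) (𝓝 p) (𝓝 0) := by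
  obtain ⟨R, hR⟩ := hΩ.subset_ball p
  let f : R2 → ℝ := (ball 0 (R + 1)).indicator (angularForm v)
  have hf : Integrable f := (integrable_indicator_iff measurableSet_ball).2 <| by
    simpa using integrableOn_angularForm (isBounded_ball (x := (0 : R2)) (r := R + 1)) v 0
  have h_eq {q z : R2} (hq : dist q p < 1) (hz : z ∈ Ω) : f (z - q) = angularForm v (z - q) := by
    refine indicator_of_mem (mem_ball_zero_iff.2 ?_) _
    rw [← dist_eq_norm]
    linarith [dist_triangle z p q, mem_ball.1 (hR hz), dist_comm p q]
  refine squeeze_zero' (.of_forall fun q ↦ integral_nonneg fun z ↦ abs_nonneg _) ?_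
    (tendsto_integral_norm_sub_comp_sub hf p)
  filter_upwards [ball_mem_nhds p one_pos] with q hq
  calc ∫ z in Ω, |angularForm v (z - q) - angularForm v (z - p)|
      = ∫ z in Ω, ‖f (z - q) - f (z - p)‖ := by
        refine setIntegral_congr_fun hΩo.measurableSet fun z hz ↦ ?_
        simp only [h_eq (mem_ball.1 hq) hz, h_eq (dist_self p ▸ one_pos) hz, Real.norm_eq_abs]
    _ ≤ ∫ z, ‖f (z - q) - f (z - p)‖ :=
        setIntegral_le_integral ((hf.comp_sub_right q).sub (hf.comp_sub_right p)).norm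
          (.of_forall fun z ↦ norm_nonneg _)

variable {ι : Type*} [Fintype ι]

/-- The unimodular map whose pointwise product with a sphere-valued map moves vortices of degrees
`d a` from `p a` to `q a`. -/
def vortexShift (d : ι → ℤ) (p q : ι → R2) (z : R2) : ℂ :=
  ∏ a, (vortex (z - q a) * (vortex (z - p a))⁻¹) ^ d a

/-- The derivative of the phase of `vortexShift d p q` in the direction `v`. -/
def vortexShiftForm (d : ι → ℤ) (p q : ι → R2) (v z : R2) : ℝ :=
  ∑ a, d a * (angularForm v (z - q a) + -angularForm v (z - p a))

variable (d : ι → ℤ) (p q : ι → R2)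

lemma isPhase_vortexShift (hΩ : Bornology.IsBounded Ω) (v : R2) :
    IsPhase (volume.restrict Ω) Ω v (vortexShift d p q) (vortexShiftForm d p q v) :=
  have h (c : R2) := isPhase_vortex (Ω := Ω) v (integrableOn_norm_sub_inv (by simp) hΩ c)
  .prod _ fun a _ ↦ ((h (q a)).mul (h (p a)).inv).zpow (d a)

lemma half_mul_integral_vortexShiftForm (hΩo : IsOpen Ω) (hΩ : Bornology.IsBounded Ω)
    (hp : ∀ a, p a ∈ closure Ω) (hq : ∀ a, q a ∈ closure Ω) {φ : R2 → ℝ} (hφ : MemLip0 Ω φ) :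
    (1 / 2) * ∫ z in Ω,
      (vortexShiftForm d p q (EuclideanSpace.single 0 1) z *
          fderiv ℝ φ z (EuclideanSpace.single 1 1) -
        vortexShiftForm d p q (EuclideanSpace.single 1 1) z *
          fderiv ℝ φ z (EuclideanSpace.single 0 1)) =
      Real.pi * ∑ a, d a * (φ (q a) - φ (p a)) := by
  let J (c z : R2) : ℝ :=
    angularForm (EuclideanSpace.single 0 1) (z - c) * fderiv ℝ φ z (EuclideanSpace.single 1 1) -
      angularForm (EuclideanSpace.single 1 1) (z - c) * fderiv ℝ φ z (EuclideanSpace.single 0 1)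
  have hJ (c : R2) : IntegrableOn (J c) Ω :=
    (integrableOn_mul_fderiv hΩo (integrableOn_angularForm hΩ _ c) hφ _).sub
      (integrableOn_mul_fderiv hΩo (integrableOn_angularForm hΩ _ c) hφ _)
  have h_flux {c : R2} (hc : c ∈ closure Ω) : ∫ z in Ω, J c z = 2 * (Real.pi * φ c) := by
    linarith [half_mul_integral_angularForm hΩo hΩ hφ hc]
  have h_int (a : ι) : IntegrableOn (fun z ↦ (d a : ℝ) * (J (q a) z - J (p a) z)) Ω :=
    ((hJ (q a)).sub (hJ (p a))).const_mul _
  calc _ = (1 / 2) * ∫ z in Ω, ∑ a, d a * (J (q a) z - J (p a) z) := by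
        congr 2 with z
        simp only [vortexShiftForm, J, Finset.sum_mul, ← Finset.sum_sub_distrib]
        exact Finset.sum_congr rfl fun a _ ↦ by ring
    _ = (1 / 2) * ∑ a, d a * (2 * (Real.pi * φ (q a)) - 2 * (Real.pi * φ (p a))) := by
        rw [integral_finsetSum _ fun a _ ↦ h_int a]
        simp only [integral_const_mul, integral_sub (hJ _) (hJ _), h_flux (hp _), h_flux (hq _)]
    _ = Real.pi * ∑ a, d a * (φ (q a) - φ (p a)) := by
        rw [Finset.mul_sum, Finset.mul_sum]
        exact Finset.sum_congr rfl fun a _ ↦ by ring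

lemma tendsto_vortexShift {z : R2} (hz : ∀ a, z - p a ≠ 0) :
    Tendsto (fun q ↦ vortexShift d p q z) (𝓝 p) (𝓝 1) := by
  have h (a : ι) : Tendsto (fun q : ι → R2 ↦ (vortex (z - q a) * (vortex (z - p a))⁻¹) ^ d a)
      (𝓝 p) (𝓝 1) := by
    have h_vortex : Tendsto (fun q : ι → R2 ↦ vortex (z - q a)) (𝓝 p) (𝓝 (vortex (z - p a))) :=
      (continuousAt_vortex (hz a)).tendsto.comp
        ((continuous_const.sub (continuous_apply a)).tendsto p)
    have h_ne : vortex (z - p a) ≠ 0 := norm_ne_zero_iff.1 (by simp [norm_vortex (hz a)])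
    have h_ratio := h_vortex.mul_const (vortex (z - p a))⁻¹
    rw [mul_inv_cancel₀ h_ne] at h_ratio
    simpa only [one_zpow] using h_ratio.zpow₀ (d a) (.inl one_ne_zero)
  simpa only [vortexShift, Finset.prod_const_one] using tendsto_finsetProd Finset.univ fun a _ ↦ h a

lemma tendsto_integral_abs_vortexShiftForm (hΩo : IsOpen Ω) (hΩ : Bornology.IsBounded Ω) (v : R2) :
    Tendsto (fun q ↦ ∫ z in Ω, |vortexShiftForm d p q v z|) (𝓝 p) (𝓝 0) := by
  have h_int (a : ι) (q : ι → R2) : Integrable (fun z ↦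
      |(d a : ℝ)| * |angularForm v (z - q a) - angularForm v (z - p a)|) (volume.restrict Ω) :=
    (((integrableOn_angularForm hΩ v (q a)).sub
      (integrableOn_angularForm hΩ v (p a))).abs).const_mul _
  have h_sum : Tendsto (fun q : ι → R2 ↦ ∑ a, |(d a : ℝ)| *
      ∫ z in Ω, |angularForm v (z - q a) - angularForm v (z - p a)|) (𝓝 p) (𝓝 0) := by
    have h (a : ι) := ((tendsto_integral_abs_angularForm_sub hΩo hΩ v (p a)).comp
      ((continuous_apply a).tendsto p)).const_mul |(d a : ℝ)|
    simpa using tendsto_finsetSum Finset.univ fun a _ ↦ h a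
  refine squeeze_zero (fun q ↦ integral_nonneg fun z ↦ abs_nonneg _) (fun q ↦ ?_) h_sum
  calc ∫ z in Ω, |vortexShiftForm d p q v z|
      ≤ ∫ z in Ω, ∑ a, |(d a : ℝ)| * |angularForm v (z - q a) - angularForm v (z - p a)| := by
        refine integral_mono (isPhase_vortexShift d p q hΩ v).integrable.abs
          (integrable_finsetSum _ fun a _ ↦ h_int a q) fun z ↦ ?_
        simpa only [vortexShiftForm, abs_mul, sub_eq_add_neg] using
          Finset.abs_sum_le_sum_abs (fun a ↦ d a * (angularForm v (z - q a) +
            -angularForm v (z - p a))) Finset.univ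
    _ = _ := by
        rw [integral_finsetSum _ fun a _ ↦ h_int a q]
        simp only [integral_const_mul]

end Displacement

/-! ### Continuity of the displacement -/

section Continuity

variable {Ω : Set R2} {u : R2 → R2} {G : R2 → Matrix (Fin 2) (Fin 2) ℝ}

lemma frob_le_sum_norm_complexCol (M : Matrix (Fin 2) (Fin 2) ℝ) :
    frob M ≤ ∑ j, ‖complexCol M j‖ := by
  have h_sq : ∑ i, ∑ j, M i j ^ 2 = ∑ j, ‖complexCol M j‖ ^ 2 := by
    rw [Finset.sum_comm]
    refine Finset.sum_congr rfl fun j _ ↦ ?_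
    rw [Complex.sq_norm, Complex.normSq_apply, re_complexCol, im_complexCol, Fin.sum_univ_two, sq,
      sq]
  rw [frob, h_sq]
  exact Real.sqrt_le_iff.2 ⟨by positivity,
    Finset.sum_sq_le_sq_sum_of_nonneg fun j _ ↦ norm_nonneg _⟩

lemma complexCol_sub (M N : Matrix (Fin 2) (Fin 2) ℝ) (j : Fin 2) :
    complexCol (M - N) j = complexCol M j - complexCol N j := by
  apply Complex.ext <;> simp

lemma norm_sub_rotate_add_frob_le {V : R2 → ℂ} {θ : Fin 2 → R2 → ℝ} {z : R2} (hV : ‖V z‖ = 1)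
    (hu : ‖toComplex (u z)‖ = 1) :
    ‖u z - rotate V u z‖ + frob (G z - rotateGradient V θ u G z) ≤
      ‖1 - V z‖ * (1 + ∑ j, ‖complexCol (G z) j‖) + ∑ j, |θ j z| := by
  have h_map : ‖u z - rotate V u z‖ = ‖1 - V z‖ := by
    rw [← toComplex.norm_map, map_sub, toComplex_rotate, ← one_sub_mul, norm_mul, hu, mul_one]
  have h_col (j : Fin 2) : ‖complexCol (G z - rotateGradient V θ u G z) j‖ ≤
      ‖1 - V z‖ * ‖complexCol (G z) j‖ + |θ j z| := by
    calc ‖complexCol (G z - rotateGradient V θ u G z) j‖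
        = ‖(1 - V z) * complexCol (G z) j - V z * (Complex.I * θ j z * toComplex (u z))‖ := by
          rw [complexCol_sub, complexCol_rotateGradient]
          congr 1
          ring
      _ ≤ ‖(1 - V z) * complexCol (G z) j‖ + ‖V z * (Complex.I * θ j z * toComplex (u z))‖ :=
          norm_sub_le _ _
      _ = ‖1 - V z‖ * ‖complexCol (G z) j‖ + |θ j z| := by simp [hV, hu]
  calc ‖u z - rotate V u z‖ + frob (G z - rotateGradient V θ u G z)
      ≤ ‖1 - V z‖ + ∑ j, (‖1 - V z‖ * ‖complexCol (G z) j‖ + |θ j z|) := by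
        rw [h_map]
        gcongr
        exact (frob_le_sum_norm_complexCol _).trans (Finset.sum_le_sum fun j _ ↦ h_col j)
    _ = ‖1 - V z‖ * (1 + ∑ j, ‖complexCol (G z) j‖) + ∑ j, |θ j z| := by
        rw [Finset.sum_add_distrib, ← Finset.mul_sum]
        ring

variable {ι : Type*} [Fintype ι] (d : ι → ℤ) (p q : ι → R2)

lemma tendsto_integral_norm_one_sub_vortexShift_mul (hΩ : Bornology.IsBounded Ω) {h : R2 → ℝ}
    (hh : IntegrableOn h Ω) :
    Tendsto (fun q ↦ ∫ z in Ω, ‖1 - vortexShift d p q z‖ * h z) (𝓝 p) (𝓝 0) := by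
  have h_phase (q : ι → R2) := isPhase_vortexShift d p q hΩ 0
  have h_lim := tendsto_integral_filter_of_dominated_convergence (l := 𝓝 p)
    (μ := volume.restrict Ω) (F := fun q z ↦ ‖1 - vortexShift d p q z‖ * h z) (f := fun _ ↦ 0)
    (fun z ↦ 2 * ‖h z‖)
    (.of_forall fun q ↦ (aestronglyMeasurable_const.sub
      (h_phase q).aestronglyMeasurable).norm.mul hh.1)
    (.of_forall fun q ↦ (h_phase q).norm_one_sub_le_two.mono fun z hz ↦ ?_) (hh.norm.const_mul 2) ?_
  · simpa only [integral_zero] using h_lim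
  · rw [norm_mul, norm_norm]
    gcongr
  · filter_upwards [ae_all_iff.2 fun a ↦ ae_sub_ne_zero (μ := volume.restrict Ω) (p a)] with z hz
    simpa using ((tendsto_vortexShift d p hz).const_sub 1).norm.mul_const (h z)

/-- The map obtained from `u` by moving vortices of degrees `d a` from `p a` to `q a`. -/
def displace (d : ι → ℤ) (p q : ι → R2) (u : R2 → R2) : R2 → R2 :=
  rotate (vortexShift d p q) u

/-- The weak gradient of `displace d p q u`, where `G` is the weak gradient of `u`. -/
def displaceGradient (d : ι → ℤ) (p q : ι → R2) (u : R2 → R2)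
    (G : R2 → Matrix (Fin 2) (Fin 2) ℝ) : R2 → Matrix (Fin 2) (Fin 2) ℝ :=
  rotateGradient (vortexShift d p q) (fun j ↦ vortexShiftForm d p q (EuclideanSpace.single j 1)) u G

lemma MemW11.displace (hΩ : Bornology.IsBounded Ω) (hu : MemW11 Ω u G) (hS : SphereValued Ω u) :
    MemW11 Ω (displace d p q u) (displaceGradient d p q u G) :=
  hu.rotate (fun _ ↦ isPhase_vortexShift d p q hΩ _) hS

lemma SphereValued.displace (hΩ : Bornology.IsBounded Ω) (hS : SphereValued Ω u) :
    SphereValued Ω (displace d p q u) :=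
  hS.rotate (fun _ ↦ isPhase_vortexShift d p q hΩ _)

variable {p q}

lemma detPairing_displace (hΩo : IsOpen Ω) (hΩ : Bornology.IsBounded Ω) (hu : MemW11 Ω u G)
    (hS : SphereValued Ω u) (hp : ∀ a, p a ∈ closure Ω) (hq : ∀ a, q a ∈ closure Ω) {φ : R2 → ℝ}
    (hφ : MemLip0 Ω φ) :
    detPairing Ω (displace d p q u) (displaceGradient d p q u G) φ =
      detPairing Ω u G φ + Real.pi * ∑ a, d a * (φ (q a) - φ (p a)) := by
  rw [← half_mul_integral_vortexShiftForm d p q hΩo hΩ hp hq hφ]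
  exact detPairing_rotate (fun _ ↦ isPhase_vortexShift d p q hΩ _) hΩo hu hS hφ

variable (p)

lemma tendsto_integral_norm_sub_displace (hΩo : IsOpen Ω) (hΩ : Bornology.IsBounded Ω)
    (hu : MemW11 Ω u G) (hS : SphereValued Ω u) :
    Tendsto (fun q ↦ ∫ z in Ω, (‖u z - displace d p q u z‖ +
      frob (G z - displaceGradient d p q u G z))) (𝓝 p) (𝓝 0) := by
  let θ (q : ι → R2) (j : Fin 2) := vortexShiftForm d p q (EuclideanSpace.single j 1)
  have h_phase (q : ι → R2) (j : Fin 2) : IsPhase (volume.restrict Ω) Ω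
    (EuclideanSpace.single j 1) (vortexShift d p q) (θ q j) := isPhase_vortexShift d p q hΩ _
  let h (z : R2) : ℝ := 1 + ∑ j, ‖complexCol (G z) j‖
  have hh : IntegrableOn h Ω := (integrableOn_const hΩ.measure_lt_top.ne).add <|
    integrable_finsetSum _ fun j _ ↦ ((memW11_iff.1 hu).2 j).1.norm
  have h_rotation (q : ι → R2) : IntegrableOn (fun z ↦ ‖1 - vortexShift d p q z‖ * h z) Ω :=
    hh.bdd_mul (aestronglyMeasurable_const.sub (h_phase q 0).aestronglyMeasurable).norm
      ((h_phase q 0).norm_one_sub_le_two.mono fun z hz ↦ by rwa [norm_norm])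
  have h_phases (q : ι → R2) : IntegrableOn (fun z ↦ ∑ j, |θ q j z|) Ω :=
    integrable_finsetSum _ fun j _ ↦ (h_phase q j).integrable.abs
  have h_lim : Tendsto (fun q ↦ (∫ z in Ω, ‖1 - vortexShift d p q z‖ * h z) +
      ∑ j, ∫ z in Ω, |θ q j z|) (𝓝 p) (𝓝 0) := by
    simpa using (tendsto_integral_norm_one_sub_vortexShift_mul d p hΩ hh).add
      (tendsto_finsetSum Finset.univ fun j _ ↦
        tendsto_integral_abs_vortexShiftForm d p hΩo hΩ (EuclideanSpace.single j 1))
  refine squeeze_zero (fun q ↦ integral_nonneg fun z ↦ add_nonneg (norm_nonneg _)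
    (Real.sqrt_nonneg _)) (fun q ↦ ?_) h_lim
  rw [← integral_finsetSum _ fun j _ ↦ (h_phase q j).integrable.abs,
    ← integral_add (h_rotation q) (h_phases q)]
  refine integral_mono_of_nonneg (.of_forall fun z ↦ add_nonneg (norm_nonneg _)
    (Real.sqrt_nonneg _)) ((h_rotation q).add (h_phases q)) ?_
  filter_upwards [(h_phase q 0).norm_eq_one, hS.norm_toComplex] with z hVz huz
  exact norm_sub_rotate_add_frob_le hVz huz

end Continuity

/-! ### General position -/

section GeneralPosition

variable {ι E : Type*} [NormedAddCommGroup E] [NormedSpace ℝ E]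

/-- The points `q a`, `a ∈ T`, are distinct and no three of them are collinear. -/
def InGeneralPositionOn (q : ι → E) (T : Set ι) : Prop :=
  InjOn q T ∧ ∀ᵉ (a ∈ T) (b ∈ T) (c ∈ T), a ≠ b → a ≠ c → b ≠ c → ¬ Collinear ℝ {q a, q b, q c}

lemma InGeneralPositionOn.insert_update {q : ι → E} {S : Set ι} (hq : InGeneralPositionOn q S)
    {a : ι} (ha : a ∉ S) {z : E} (hz : ∀ b c, z ∉ line[ℝ, q b, q c]) :
    InGeneralPositionOn (Function.update q a z) (insert a S) := by
  have h_ne {b : ι} (hb : b ∈ S) : b ≠ a := ne_of_mem_of_not_mem hb ha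
  have h_inj {b : ι} : z ≠ q b := fun h ↦ hz b b (h ▸ left_mem_affineSpan_pair ℝ z z)
  have h_col {b c : ι} {s : Set E} (hb : b ∈ S) (hc : c ∈ S) (hbc : b ≠ c)
      (hs : Collinear ℝ s) (hbs : q b ∈ s) (hcs : q c ∈ s) (hzs : z ∈ s) : False :=
    hz b c (hs.mem_affineSpan_of_mem_of_ne hbs hcs hzs (hq.1.ne hb hc hbc))
  refine ⟨?_, ?_⟩
  · simp only [injOn_insert ha, Function.update_self]
    refine ⟨fun b hb c hc hbc ↦ hq.1 hb hc ?_, ?_⟩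
    · rwa [Function.update_of_ne (h_ne hb), Function.update_of_ne (h_ne hc)] at hbc
    · rintro ⟨b, hb, hbz⟩
      exact h_inj (by rw [← hbz, Function.update_of_ne (h_ne hb)])
  · intro b hb c hc e he hbc hbe hce h
    rcases hb with rfl | hb
    · have hc := mem_of_mem_insert_of_ne hc hbc.symm
      have he := mem_of_mem_insert_of_ne he hbe.symm
      rw [Function.update_self, Function.update_of_ne (h_ne hc),
        Function.update_of_ne (h_ne he)] at h
      exact h_col hc he hce h (by simp) (by simp) (by simp)
    rcases hc with rfl | hc
    · have he := mem_of_mem_insert_of_ne he hce.symm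
      rw [Function.update_self, Function.update_of_ne hbc, Function.update_of_ne (h_ne he)] at h
      exact h_col hb he hbe h (by simp) (by simp) (by simp)
    rw [Function.update_of_ne (h_ne hb), Function.update_of_ne (h_ne hc)] at h
    rcases he with rfl | he
    · rw [Function.update_self] at h
      exact h_col hb hc hbc h (by simp) (by simp) (by simp)
    · rw [Function.update_of_ne (h_ne he)] at h
      exact hq.2 b hb c hc e he hbc hbe hce h

variable [FiniteDimensional ℝ E]

lemma frequently_forall_notMem_line [Countable ι] (hE : 1 < Module.finrank ℝ E) (q : ι → E)
    (x : E) : ∃ᶠ z in 𝓝 x, ∀ b c, z ∉ line[ℝ, q b, q c] := by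
  borelize E
  have h_line (b c : ι) : ∀ᵐ z ∂(Measure.addHaar : Measure E), z ∉ line[ℝ, q b, q c] := by
    refine compl_mem_ae_iff.2 (Measure.addHaar_affineSubspace _ _ fun h_top ↦ ?_)
    have h_dim := collinear_iff_finrank_le_one.1 (collinear_pair ℝ (q b) (q c))
    rw [← direction_affineSpan, h_top, AffineSubspace.direction_top, finrank_top] at h_dim
    exact h_dim.not_gt hE
  have h_dense := Measure.dense_of_ae (ae_all_iff.2 fun b ↦ ae_all_iff.2 (h_line b))
  exact mem_closure_iff_frequently.1 (h_dense x)

lemma exists_inGeneralPositionOn [Finite ι] (hE : 1 < Module.finrank ℝ E) (p : ι → E) (T : Set ι)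
    {P : (ι → E) → Prop} (hP : ∀ᶠ q in 𝓝 p, P q) :
    ∃ q, P q ∧ EqOn q p Tᶜ ∧ InGeneralPositionOn q T := by
  suffices ∃ q, (∀ᶠ q' in 𝓝 q, P q') ∧ EqOn q p Tᶜ ∧ InGeneralPositionOn q T from
    this.imp fun q h ↦ ⟨h.1.self_of_nhds, h.2⟩
  induction T, T.toFinite using Set.Finite.induction_on with
  | empty => exact ⟨p, hP, eqOn_refl _ _, by simp [InGeneralPositionOn]⟩
  | @insert a S ha _ ih =>
    obtain ⟨q, hPq, hqp, hq⟩ := ih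
    have h_update : Tendsto (Function.update q a) (𝓝 (q a)) (𝓝 q) := by
      have h_cont : Continuous (Function.update q a) := continuous_const.update a continuous_id
      simpa using h_cont.tendsto (q a)
    obtain ⟨z, hz, hPz⟩ := ((frequently_forall_notMem_line hE q (q a)).and_eventually
      (h_update.eventually hPq.eventually_nhds)).exists
    refine ⟨Function.update q a z, hPz, fun b hb ↦ ?_, hq.insert_update ha hz⟩
    rw [mem_compl_iff, mem_insert_iff, not_or] at hb
    rw [Function.update_of_ne hb.1, hqp hb.2]

lemma exists_mem_closure_inGeneralPositionOn [Finite ι] (hE : 1 < Module.finrank ℝ E)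
    (p : ι → E) {Ω : Set E} (hΩ : IsOpen Ω) (hp : ∀ a, p a ∈ closure Ω)
    {P : (ι → E) → Prop} (hP : ∀ᶠ q in 𝓝 p, (∀ a, q a ∈ closure Ω) → P q) :
    ∃ q, P q ∧ (∀ a, q a ∈ closure Ω) ∧ InGeneralPositionOn q {a | q a ∈ Ω} := by
  have h_interior : ∀ᶠ q in 𝓝 p, ∀ a, p a ∈ Ω → q a ∈ Ω := eventually_all.2 fun a ↦
    eventually_imp_distrib_left.2 fun ha ↦ (continuous_apply a).tendsto p (hΩ.mem_nhds ha)
  obtain ⟨q, ⟨hqP, hqΩ⟩, hqp, hq⟩ :=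
    exists_inGeneralPositionOn hE p {a | p a ∈ Ω} (hP.and h_interior)
  have h_mem : {a | q a ∈ Ω} = {a | p a ∈ Ω} := by
    ext a
    refine ⟨fun ha ↦ by_contra fun hpa ↦ hpa ?_, hqΩ a⟩
    rwa [mem_ofPred, ← hqp hpa]
  have hq_mem (a : ι) : q a ∈ closure Ω := by
    by_cases ha : p a ∈ Ω
    · exact subset_closure (hqΩ a ha)
    · exact hqp ha ▸ hp a
  exact ⟨q, hqP hq_mem, hq_mem, h_mem ▸ hq⟩

end GeneralPosition

/-! ### Approximation by points in general position -/

section Approximation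

lemma flatNorm_le {Ω : Set R2} {L : ℝ≥0} {F : (R2 → ℝ) → ℝ} {c : ℝ}
    (h : ∀ φ, FlatAdmissible Ω (frontier Ω) L φ → F φ ≤ c) :
    flatNorm Ω L F ≤ ENNReal.ofReal c :=
  iSup₂_le fun φ hφ ↦ ENNReal.ofReal_le_ofReal (h φ hφ)

variable {ι : Type*} [Fintype ι] (d : ι → ℤ) {p q : ι → R2} {Ω : Set R2} {u : R2 → R2}
  {G : R2 → Matrix (Fin 2) (Fin 2) ℝ}

lemma flatNorm_detPairing_sub_displace_le (hΩo : IsOpen Ω) (hΩ : Bornology.IsBounded Ω)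
    (hu : MemW11 Ω u G) (hS : SphereValued Ω u) (hp : ∀ a, p a ∈ closure Ω)
    (hq : ∀ a, q a ∈ closure Ω) :
    flatNorm Ω 1 (fun φ ↦ detPairing Ω u G φ -
        detPairing Ω (displace d p q u) (displaceGradient d p q u G) φ) ≤
      ENNReal.ofReal (Real.pi * ∑ a, |(d a : ℝ)| * dist (p a) (q a)) := by
  refine flatNorm_le fun φ ⟨hφ, hφ₀, _⟩ ↦ ?_
  have h_term (a : ι) : d a * (φ (p a) - φ (q a)) ≤ |(d a : ℝ)| * dist (p a) (q a) := by
    refine (le_abs_self _).trans ?_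
    rw [abs_mul, ← Real.dist_eq]
    gcongr
    simpa using hφ.dist_le_mul _ (hp a) _ (hq a)
  calc detPairing Ω u G φ - detPairing Ω (displace d p q u) (displaceGradient d p q u G) φ
      = Real.pi * ∑ a, d a * (φ (p a) - φ (q a)) := by
        rw [detPairing_displace d hΩo hΩ hu hS hp hq ⟨⟨1, hφ⟩, hφ₀⟩, sub_add_cancel_left,
          ← mul_neg, ← Finset.sum_neg_distrib]
        simp only [← mul_neg, neg_sub]
    _ ≤ Real.pi * ∑ a, |(d a : ℝ)| * dist (p a) (q a) := by
        gcongr Real.pi * ?_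
        exact Finset.sum_le_sum fun a _ ↦ h_term a

variable (p)

lemma eventually_norm_sub_displace_add_flatNorm_lt (hΩo : IsOpen Ω) (hΩ : Bornology.IsBounded Ω)
    (hu : MemW11 Ω u G) (hS : SphereValued Ω u) (hp : ∀ a, p a ∈ closure Ω) {ε : ℝ} (hε : 0 < ε) :
    ∀ᶠ q in 𝓝 p, (∀ a, q a ∈ closure Ω) →
      ENNReal.ofReal (∫ z in Ω, (‖u z - displace d p q u z‖ +
          frob (G z - displaceGradient d p q u G z))) +
        flatNorm Ω 1 (fun φ ↦ detPairing Ω u G φ -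
          detPairing Ω (displace d p q u) (displaceGradient d p q u G) φ) < ENNReal.ofReal ε := by
  have h_flat : Tendsto (fun q : ι → R2 ↦ Real.pi * ∑ a, |(d a : ℝ)| * dist (p a) (q a))
      (𝓝 p) (𝓝 0) := by
    have h_cont : Continuous fun q : ι → R2 ↦ Real.pi * ∑ a, |(d a : ℝ)| * dist (p a) (q a) := by
      fun_prop
    simpa using h_cont.tendsto p
  have h_lim := (ENNReal.tendsto_ofReal
    (tendsto_integral_norm_sub_displace d p hΩo hΩ hu hS)).add (ENNReal.tendsto_ofReal h_flat)
  rw [ENNReal.ofReal_zero, add_zero] at h_lim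
  filter_upwards [h_lim.eventually_lt_const (ENNReal.ofReal_pos.2 hε)] with q hq hq_mem
  exact (add_le_add_right
    (flatNorm_detPairing_sub_displace_le d hΩo hΩ hu hS hp hq_mem) _).trans_lt hq

lemma InGeneralPositionOn.interiorPointsGeneric {n : ℕ} {q : Fin n ⊕ Fin n → R2}
    (hq : InGeneralPositionOn q {a | q a ∈ Ω}) :
    InteriorPointsGeneric Ω (q ∘ Sum.inl) (q ∘ Sum.inr) := by
  rw [InteriorPointsGeneric, Sum.elim_comp_inl_inr]
  exact ⟨fun a b ha hb hab ↦ hq.1.ne ha hb hab, fun a b c ha hb hc ↦ hq.2 a ha b hb c hc⟩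

end Approximation

theorem density_noncollinear_points_general {Ω : Set R2} (hΩo : IsOpen Ω)
    (hΩb : Bornology.IsBounded Ω) {u : R2 → R2} {G : R2 → Matrix (Fin 2) (Fin 2) ℝ}
    (hu : MemW11 Ω u G) (hS : SphereValued Ω u) {n : ℕ} {x y : Fin n → R2}
    (hxy : ∀ i, x i ∈ closure Ω ∧ y i ∈ closure Ω)
    (hrep : ∀ φ : R2 → ℝ, MemLip0 Ω φ →
      detPairing Ω u G φ = Real.pi * ∑ i, (φ (x i) - φ (y i))) {ε : ℝ} (hε : 0 < ε) :
    ∃ (uε : R2 → R2) (Gε : R2 → Matrix (Fin 2) (Fin 2) ℝ) (xε yε : Fin n → R2),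
      MemW11 Ω uε Gε ∧ SphereValued Ω uε ∧
      (∀ i, xε i ∈ closure Ω ∧ yε i ∈ closure Ω) ∧
      (∀ φ : R2 → ℝ, MemLip0 Ω φ →
        detPairing Ω uε Gε φ = Real.pi * ∑ i, (φ (xε i) - φ (yε i))) ∧
      InteriorPointsGeneric Ω xε yε ∧
      ENNReal.ofReal (∫ z in Ω, (‖u z - uε z‖ + frob (G z - Gε z))) +
          flatNorm Ω 1 (fun φ ↦ detPairing Ω u G φ - detPairing Ω uε Gε φ) <
        ENNReal.ofReal ε := by
  let p : Fin n ⊕ Fin n → R2 := Sum.elim x y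
  let d : Fin n ⊕ Fin n → ℤ := Sum.elim 1 (-1)
  have hp : ∀ a, p a ∈ closure Ω := Sum.forall.2 (forall_and.1 hxy)
  obtain ⟨q, h_close, hq, h_generic⟩ := exists_mem_closure_inGeneralPositionOn (by simp) p hΩo hp
    (eventually_norm_sub_displace_add_flatNorm_lt d p hΩo hΩb hu hS hp hε)
  refine ⟨displace d p q u, displaceGradient d p q u G, q ∘ Sum.inl, q ∘ Sum.inr,
    hu.displace d p q hΩb hS, hS.displace d p q hΩb, fun i ↦ ⟨hq _, hq _⟩, fun φ hφ ↦ ?_,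
    h_generic.interiorPointsGeneric, h_close⟩
  have h_sum (f : Fin n ⊕ Fin n → ℝ) : ∑ a, d a * f a = ∑ i, (f (.inl i) - f (.inr i)) := by
    simp [d, Fintype.sum_sum_type, sub_eq_add_neg, Finset.sum_add_distrib]
  rw [detPairing_displace d hΩo hΩb hu hS hp hq hφ, hrep φ hφ, h_sum, ← mul_add,
    ← Finset.sum_add_distrib]
  congr! 2 with i
  simp only [p, Sum.elim_inl, Sum.elim_inr, Function.comp_apply]
  ring

/-- **Lemma 5.3 (density: not collinear points).** If `Det(∇u)` is a finite sum of
dipoles satisfying `(P_f)`, then `u` can be approximated by `u_ε ∈ W^{1,1}(Ω;S¹)` whose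
Jacobian is a finite sum of dipoles with distinct, three-by-three non-collinear
interior points. -/
theorem density_noncollinear_points (Ω : Set R2) (hΩo : IsOpen Ω)
    (hΩb : Bornology.IsBounded Ω) (hΩc : IsConnected Ω) (hΩl : HasLipschitzBoundary Ω)
    (u : R2 → R2) (G : R2 → Matrix (Fin 2) (Fin 2) ℝ)
    (hu : MemW11 Ω u G) (hS : SphereValued Ω u)
    (n : ℕ) (x y : Fin n → R2) (hPf : SatisfiesPf Ω x y)
    (hrep : ∀ φ : R2 → ℝ, MemLip0 Ω φ →
      detPairing Ω u G φ = Real.pi * ∑ i, (φ (x i) - φ (y i))) :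
    ∀ ε : ℝ, 0 < ε →
      ∃ (uε : R2 → R2) (Gε : R2 → Matrix (Fin 2) (Fin 2) ℝ) (xε yε : Fin n → R2),
        MemW11 Ω uε Gε ∧ SphereValued Ω uε ∧
        (∀ i, xε i ∈ closure Ω ∧ yε i ∈ closure Ω) ∧
        (∀ φ : R2 → ℝ, MemLip0 Ω φ →
          detPairing Ω uε Gε φ = Real.pi * ∑ i, (φ (xε i) - φ (yε i))) ∧
        InteriorPointsGeneric Ω xε yε ∧
        ENNReal.ofReal (∫ z in Ω, (‖u z - uε z‖ + frob (G z - Gε z))) +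
            flatNorm Ω 1 (fun φ => detPairing Ω u G φ - detPairing Ω uε Gε φ) <
          ENNReal.ofReal ε := by
  intro ε hε
  refine density_noncollinear_points_general hΩo hΩb hu hS (fun i ↦ ?_) hrep hε
  rcases hPf.1 i with h | h
  · exact ⟨subset_closure h.1, frontier_subset_closure h.2.1⟩
  · exact ⟨frontier_subset_closure h.2.1, subset_closure h.1⟩
end
end

section
/- Let Ω ⊂ ℝ² be a bounded, open, connected set with Lipschitz boundary, let ((x_k,y_k))_{k∈I} be a finite family of pairs of points of cl(Ω) satisfying (P_f), let T be the associated functional on Lip₀(Ω), T(φ) := Σ_{k∈I}(φ(x_k) − φ(y_k)), and let {I_P, I_D}, τ be a minimizer of the energy E as in the structure lemma. Then there exists φ ∈ Lip₀(Ω) with ‖φ‖_∞ ≤ 1 and lip(φ) ≤ 2 such that T(φ) = E(I_P,I_D,τ); moreover φ(x_k) = 1 for every k ∈ I_P with x_k ∈ Ω, φ(y_j) = −1 for every j ∈ I ∖ τ(I_D) with y_j ∈ Ω, and φ(x_k) − φ(y_{τ(k)}) = 2|x_k − y_{τ(k)}| for every k ∈ I_D. In particular, min{ E(I_P,I_D,τ)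 : {I_P,I_D} a partition of I, τ : I_D → I injective } = max{ T(φ) : φ ∈ Lip₀(Ω), ‖φ‖_∞ ≤ 1, lip(φ) ≤ 2 }. -/
open MeasureTheory Metric Filter Set
open scoped ENNReal NNReal Topology Classical

noncomputable section

/-!
An admissible `φ` is `2`-Lipschitz on `Ω` and vanishes on `∂Ω`, so between the endpoints of a
segment it changes by at most twice the length of the segment inside `Ω`. Hence `T(φ) ≤ E` for every
configuration.

For the converse, charge for matching `x_k` with `y_j` the truncated cost
`min (2|x_k − y_j|) (c(x_k) + c(y_j))`, where `c = min 1 (2 dist(·, ∂Ω))`. It is a pseudometric, so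
linear programming duality for the assignment problem gives a permutation `σ` of least total cost
and a potential `φ` with `T(φ)` equal to that cost; normalized to vanish on `∂Ω`, it is admissible.
The permutation is not itself a configuration, but the matches that pay `2|x_k − y_{σ(k)}|`,
together with the pairs `(x_k, y_k)` which they do not touch and which satisfy `2|x_k − y_k| ≤ 1`,
are the dipoles of one whose energy is at most the total cost. So the two extrema agree, and the
values of `φ` on a minimizer follow from complementary slackness.
-/

/-! ### Duality for the assignment problem -/

section Assignment

variable {ι : Type*} [Fintype ι] {c : ι → ι → ℝ} {a b : ι → ℝ}

/-- Dual feasibility for the assignment problem with cost matrix `c`. The sign of `b` is chosen so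
that `a` and `b` are the values of one Kantorovich potential at the sources and at the targets. -/
def IsDualFeasible (c : ι → ι → ℝ) (a b : ι → ℝ) : Prop :=
  ∀ i j, a i - b j ≤ c i j

omit [Fintype ι] in
lemma isClosed_setOf_isDualFeasible (c : ι → ι → ℝ) :
    IsClosed {p : (ι → ℝ) × (ι → ℝ) | IsDualFeasible c p.1 p.2} := by
  simp only [IsDualFeasible, ofPred_forall]
  exact isClosed_iInter fun i => isClosed_iInter fun j => isClosed_le (by fun_prop) (by fun_prop)

lemma IsDualFeasible.exists_mem_Icc [Nonempty ι] (hab : IsDualFeasible c a b) {C : ℝ}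
    (hc : ∀ i j, |c i j| ≤ C) :
    ∃ a' b', IsDualFeasible c a' b' ∧ a' ∈ Icc (fun _ => -C) (fun _ => C) ∧
      b' ∈ Icc (fun _ => 0) (fun _ => 2 * C) ∧ ∑ i, (a i - b i) ≤ ∑ i, (a' i - b' i) := by
  obtain ⟨j₀, hj₀⟩ := Finite.exists_min b
  have hC : 0 ≤ C := (abs_nonneg _).trans (hc j₀ j₀)
  refine ⟨fun i => max (a i - b j₀) (-C), fun j => min (b j - b j₀) (2 * C), fun i j => ?_,
    ⟨fun i => le_max_right _ _, fun i => max_le ?_ (by linarith)⟩,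
    ⟨fun j => le_min (by linarith [hj₀ j]) (by positivity), fun j => min_le_right _ _⟩,
    Finset.sum_le_sum fun i _ => ?_⟩
  · have hcost := (abs_le.1 (hc i j)).1
    have hupper := (abs_le.1 (hc i j₀)).2
    rw [sub_le_iff_le_add, max_le_iff, ← sub_le_iff_le_add', ← sub_le_iff_le_add', le_min_iff,
      le_min_iff]
    refine ⟨⟨?_, ?_⟩, ?_, ?_⟩ <;> linarith [hab i j, hab i j₀, hj₀ j]
  · linarith [hab i j₀, (abs_le.1 (hc i j₀)).2]
  · linarith [le_max_left (a i - b j₀) (-C), min_le_left (b i - b j₀) (2 * C)]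

lemma exists_isDualFeasible_forall_sum_le (c : ι → ι → ℝ) :
    ∃ a b, IsDualFeasible c a b ∧
      ∀ a' b', IsDualFeasible c a' b' → ∑ i, (a' i - b' i) ≤ ∑ i, (a i - b i) := by
  cases isEmpty_or_nonempty ι
  · exact ⟨0, 0, fun i => isEmptyElim i, fun a' b' _ => by simp⟩
  obtain ⟨p, hp⟩ := Finite.exists_max fun p : ι × ι => |c p.1 p.2|
  set C := |c p.1 p.2|
  have hc : ∀ i j, |c i j| ≤ C := fun i j => hp (i, j)
  let K : Set ((ι → ℝ) × (ι → ℝ)) :=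
    (Icc (fun _ => -C) (fun _ => C) ×ˢ Icc (fun _ => 0) (fun _ => 2 * C)) ∩
      {q | IsDualFeasible c q.1 q.2}
  have hK : IsCompact K :=
    (isCompact_Icc.prod isCompact_Icc).inter_right (isClosed_setOf_isDualFeasible c)
  have hKne : K.Nonempty := by
    have h₀ : IsDualFeasible c (fun _ => -C) 0 := fun i j => by
      simpa using (abs_le.1 (hc i j)).1
    obtain ⟨a, b, hab, ha, hb, -⟩ := h₀.exists_mem_Icc hc
    exact ⟨(a, b), ⟨ha, hb⟩, hab⟩
  obtain ⟨q, hqK, hq⟩ := hK.exists_isMaxOn hKne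
    (f := fun q => ∑ i, (q.1 i - q.2 i)) (by fun_prop)
  refine ⟨q.1, q.2, hqK.2, fun a b hab => ?_⟩
  obtain ⟨a', b', hab', ha', hb', hle⟩ := hab.exists_mem_Icc hc
  exact hle.trans (hq (show (a', b') ∈ K from ⟨⟨ha', hb'⟩, hab'⟩))

/-- The columns that are tight for the row `i` under the dual pair `(a, b)`. -/
def tightColumns (c : ι → ι → ℝ) (a b : ι → ℝ) (i : ι) : Finset ι :=
  {j | a i - b j = c i j}

lemma IsDualFeasible.exists_pos_le_slack (hab : IsDualFeasible c a b) :
    ∃ ε > 0, ∀ i, ∀ j ∉ tightColumns c a b i, a i - b j + ε ≤ c i j := by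
  have hev : ∀ᶠ ε in 𝓝[>] (0 : ℝ), ∀ i j, j ∉ tightColumns c a b i → a i - b j + ε ≤ c i j := by
    simp only [eventually_all]
    intro i j hj
    have hlt : a i - b j < c i j :=
      (hab i j).lt_of_ne fun h => hj (by simpa [tightColumns] using h)
    filter_upwards [Ioc_mem_nhdsGT (sub_pos.2 hlt)] with ε hε
    linarith [hε.2]
  obtain ⟨ε, hε, hpos⟩ := (hev.and self_mem_nhdsWithin).exists
  exact ⟨ε, hpos, hε⟩

/- Raising `a` on `s` and `b` on the tight columns of `s` by a small `ε` keeps feasibility and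
changes the dual value by `ε * (#s - #(tight columns of s))`. -/
lemma IsDualFeasible.card_le_card_biUnion_tightColumns (hab : IsDualFeasible c a b)
    (hmax : ∀ a' b', IsDualFeasible c a' b' → ∑ i, (a' i - b' i) ≤ ∑ i, (a i - b i))
    (s : Finset ι) : s.card ≤ (s.biUnion (tightColumns c a b)).card := by
  obtain ⟨ε, hε, hslack⟩ := hab.exists_pos_le_slack
  set t := s.biUnion (tightColumns c a b)
  have hfeas : IsDualFeasible c (fun i => a i + if i ∈ s then ε else 0)
      (fun j => b j + if j ∈ t then ε else 0) := by
    intro i j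
    by_cases hi : i ∈ s <;> by_cases hj : j ∈ t <;> simp only [hi, hj, if_true, if_false]
    · linarith [hab i j]
    · linarith [hslack i j fun h => hj (Finset.mem_biUnion.2 ⟨i, hi, h⟩)]
    · linarith [hab i j]
    · linarith [hab i j]
  have hle := hmax _ _ hfeas
  simp only [Finset.sum_sub_distrib, Finset.sum_add_distrib, Finset.sum_ite_mem,
    Finset.univ_inter, Finset.sum_const, nsmul_eq_mul] at hle
  have hcard : (s.card : ℝ) * ε ≤ t.card * ε := by linarith
  exact_mod_cast le_of_mul_le_mul_right hcard hε

omit [Fintype ι] in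
theorem exists_isDualFeasible_perm_tight [Finite ι] (c : ι → ι → ℝ) :
    ∃ (a b : ι → ℝ) (σ : Equiv.Perm ι), IsDualFeasible c a b ∧ ∀ i, a i - b (σ i) = c i (σ i) := by
  cases nonempty_fintype ι
  obtain ⟨a, b, hab, hmax⟩ := exists_isDualFeasible_forall_sum_le c
  obtain ⟨f, hf, hft⟩ := (Finset.all_card_le_biUnion_card_iff_exists_injective _).1
    (hab.card_le_card_biUnion_tightColumns hmax)
  exact ⟨a, b, .ofBijective f hf.bijective_of_finite, hab,
    fun i => by simpa [tightColumns] using hft i⟩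

omit [Fintype ι] in
theorem exists_potential_perm_tight [Finite ι] [Nonempty ι] {X : Type*} {D : X → X → ℝ}
    (hself : ∀ p, D p p = 0) (htri : ∀ p q r, D p r ≤ D p q + D q r) (x y : ι → X) :
    ∃ (ψ : X → ℝ) (σ : Equiv.Perm ι), (∀ p q, ψ p - ψ q ≤ D p q) ∧
      ∀ k, ψ (x k) - ψ (y (σ k)) = D (x k) (y (σ k)) := by
  obtain ⟨a, b, σ, hab, hσ⟩ := exists_isDualFeasible_perm_tight fun i j => D (x i) (y j)
  let ψ : X → ℝ := fun p => ⨅ j, (b j + D p (y j))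
  have hψ_le (p : X) (j : ι) : ψ p ≤ b j + D p (y j) := ciInf_le (finite_range _).bddBelow j
  have hψ : ∀ p q, ψ p - ψ q ≤ D p q := fun p q =>
    sub_le_comm.1 <| le_ciInf fun j => by linarith [hψ_le p j, htri p q (y j)]
  refine ⟨ψ, σ, hψ, fun k => le_antisymm (hψ _ _) ?_⟩
  have hx : a k ≤ ψ (x k) := le_ciInf fun j => by linarith [hab k j]
  have hy : ψ (y (σ k)) ≤ b (σ k) := by simpa [hself] using hψ_le (y (σ k)) (σ k)
  linarith [hσ k]

end Assignment

section PiecewiseId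

variable {ι : Type*} [DecidableEq ι] {f : ι → ι} {A B : Finset ι}

lemma injOn_piecewise_id_union (hf : InjOn f A) (hAB : Disjoint A B)
    (hfB : Disjoint (A.image f) B) : InjOn (A.piecewise f id) ↑(A ∪ B) := by
  rw [Finset.coe_union, injOn_union (Finset.disjoint_coe.2 hAB)]
  have hB : ∀ j ∈ B, A.piecewise f id j = j := fun j hj =>
    A.piecewise_eq_of_notMem _ _ (Finset.disjoint_right.1 hAB hj)
  refine ⟨hf.congr fun i hi => (A.piecewise_eq_of_mem _ _ hi).symm,
    (injOn_id _).congr fun j hj => (hB j hj).symm, fun i hi j hj h => ?_⟩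
  rw [A.piecewise_eq_of_mem _ _ hi, hB j hj] at h
  exact Finset.disjoint_right.1 hfB hj (h ▸ Finset.mem_image_of_mem f hi)

lemma image_piecewise_id_union (hAB : Disjoint A B) :
    (A ∪ B).image (A.piecewise f id) = A.image f ∪ B := by
  have hA : ∀ i ∈ A, A.piecewise f id i = f i := fun i hi => A.piecewise_eq_of_mem _ _ hi
  have hB : ∀ j ∈ B, A.piecewise f id j = j := fun j hj =>
    A.piecewise_eq_of_notMem _ _ (Finset.disjoint_right.1 hAB hj)
  rw [Finset.image_union, Finset.image_congr hA, Finset.image_congr hB, Finset.image_id']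

end PiecewiseId

/-! ### The transport cost with free disposal on a set -/

section TransportCost

variable {X : Type*} [PseudoMetricSpace X] {S : Set X} {p q : X}

/-- The cost of leaving the point `p` unpaired: either the unit price, or twice the distance to the
sink `S`. -/
def discardCost (S : Set X) (p : X) : ℝ :=
  min 1 (2 * infDist p S)

/-- The cost of pairing `p` with `q`, either directly or by discarding both points. It is the
doubled `d̄_Ω` of the paper for `S = ∂Ω`, with each boundary distance truncated at `1 / 2`. -/
def transportCost (S : Set X) (p q : X) : ℝ :=
  min (2 * dist p q) (discardCost S p + discardCost S q)

lemma discardCost_nonneg (S : Set X) (p : X) : 0 ≤ discardCost S p :=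
  le_min zero_le_one (mul_nonneg zero_le_two infDist_nonneg)

lemma discardCost_le_one (S : Set X) (p : X) : discardCost S p ≤ 1 :=
  min_le_left _ _

lemma discardCost_of_mem (hp : p ∈ S) : discardCost S p = 0 := by
  simp [discardCost, infDist_zero_of_mem hp]

lemma discardCost_le_add_two_mul_dist (S : Set X) (p q : X) :
    discardCost S p ≤ discardCost S q + 2 * dist p q := by
  have h : infDist p S ≤ infDist q S + dist p q := infDist_le_infDist_add_dist
  calc discardCost S p
    _ ≤ min (1 + 2 * dist p q) (2 * infDist q S + 2 * dist p q) :=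
        min_le_min (by linarith [dist_nonneg (x := p) (y := q)]) (by linarith)
    _ = discardCost S q + 2 * dist p q := min_add_add_right _ _ _

lemma transportCost_comm (S : Set X) (p q : X) : transportCost S p q = transportCost S q p := by
  rw [transportCost, transportCost, dist_comm, add_comm]

lemma transportCost_self (S : Set X) (p : X) : transportCost S p p = 0 := by
  simp [transportCost, discardCost_nonneg]

lemma transportCost_triangle (S : Set X) (p q r : X) :
    transportCost S p r ≤ transportCost S p q + transportCost S q r := by
  have hpq := discardCost_le_add_two_mul_dist S p q
  have hrq := discardCost_le_add_two_mul_dist S r q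
  have hq := discardCost_nonneg S q
  have hpqr := dist_triangle p q r
  rw [dist_comm r q] at hrq
  simp only [transportCost, min_add, add_min, le_min_iff, min_le_iff]
  refine ⟨⟨Or.inl ?_, Or.inr ?_⟩, Or.inr ?_, Or.inr ?_⟩ <;> linarith

lemma transportCost_of_left_mem (hp : p ∈ S) :
    transportCost S p q = discardCost S p + discardCost S q := by
  refine min_eq_right ?_
  have h := discardCost_le_add_two_mul_dist S q p
  rw [discardCost_of_mem hp, dist_comm] at h
  rw [discardCost_of_mem hp]
  linarith

lemma transportCost_of_right_mem (hq : q ∈ S) :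
    transportCost S p q = discardCost S p + discardCost S q := by
  rw [transportCost_comm, transportCost_of_left_mem hq, add_comm]

lemma lipschitzWith_of_sub_le_transportCost {φ : X → ℝ}
    (hφ : ∀ p q, φ p - φ q ≤ transportCost S p q) : LipschitzWith 2 φ :=
  .of_le_add_mul 2 fun p q => sub_le_iff_le_add'.1 ((hφ p q).trans (min_le_left _ _))

lemma abs_sub_le_discardCost {φ : X → ℝ} (hφ : ∀ p q, φ p - φ q ≤ transportCost S p q)
    (hq : q ∈ S) (p : X) : |φ p - φ q| ≤ discardCost S p := by
  have hcost : transportCost S p q = discardCost S p := by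
    rw [transportCost_of_right_mem hq, discardCost_of_mem hq, add_zero]
  exact abs_sub_le_iff.2 ⟨hcost ▸ hφ p q, hcost ▸ transportCost_comm S p q ▸ hφ q p⟩

end TransportCost

/-! ### Oscillation and Hausdorff measure -/

/- Extended by zero outside `s`, the function `φ` is continuous, so on `C` it takes all values
between `φ q` and `φ p`, and all the nonzero ones are taken on `C ∩ s`. -/
lemma ofReal_sub_le_mul_hausdorffMeasure_inter {X : Type*} [EMetricSpace X]
    [MeasurableSpace X] [BorelSpace X] {s C : Set X} {K : ℝ≥0} {φ : X → ℝ} {p q : X}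
    (hφ : LipschitzOnWith K φ (closure s)) (hφ₀ : ∀ z ∈ frontier s, φ z = 0)
    (hC : IsPreconnected C) (hp : p ∈ C) (hq : q ∈ C) (hps : p ∈ closure s)
    (hqs : q ∈ closure s) :
    ENNReal.ofReal (φ p - φ q) ≤ K * μH[1] (C ∩ s) := by
  have hext : ∀ z ∈ closure s, s.indicator φ z = φ z := fun z hz =>
    indicator_apply_eq_self.2 fun hzs => hφ₀ z ⟨hz, fun h => hzs (interior_subset h)⟩
  have hcover : Icc (φ q) (φ p) ⊆ {0} ∪ φ '' (C ∩ s) := by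
    have hivt := hC.intermediate_value hq hp
      (continuous_indicator hφ₀ hφ.continuousOn).continuousOn
    rw [hext p hps, hext q hqs] at hivt
    refine hivt.trans ?_
    rintro _ ⟨z, hzC, rfl⟩
    by_cases hzs : z ∈ s
    · exact Or.inr ⟨z, ⟨hzC, hzs⟩, (indicator_of_mem hzs φ).symm⟩
    · exact Or.inl (indicator_of_notMem hzs φ)
  have himage : μH[1] (φ '' (C ∩ s)) ≤ K * μH[1] (C ∩ s) := by
    simpa using (hφ.mono (inter_subset_right.trans subset_closure)).hausdorffMeasure_image_le
      zero_le_one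
  calc ENNReal.ofReal (φ p - φ q)
    _ = volume (Icc (φ q) (φ p)) := Real.volume_Icc.symm
    _ ≤ volume ({0} : Set ℝ) + volume (φ '' (C ∩ s)) :=
        (measure_mono hcover).trans (measure_union_le _ _)
    _ = μH[1] (φ '' (C ∩ s)) := by rw [Real.volume_singleton, zero_add, hausdorffMeasure_real]
    _ ≤ K * μH[1] (C ∩ s) := himage

section SegmentLength

variable {E : Type*} [NormedAddCommGroup E] [NormedSpace ℝ E] [MeasurableSpace E] [BorelSpace E]

/-- The length `H¹([p, q] ∩ Ω)` of the part of a segment lying in `Ω`, as a real number. -/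
def segmentLength (Ω : Set E) (p q : E) : ℝ :=
  (μH[1] : Measure E).real (segment ℝ p q ∩ Ω)

lemma hausdorffMeasure_segment_inter_le (Ω : Set E) (p q : E) :
    μH[1] (segment ℝ p q ∩ Ω) ≤ edist p q :=
  (measure_mono inter_subset_left).trans_eq (hausdorffMeasure_segment p q)

lemma ofReal_segmentLength (Ω : Set E) (p q : E) :
    ENNReal.ofReal (segmentLength Ω p q) = μH[1] (segment ℝ p q ∩ Ω) :=
  ENNReal.ofReal_toReal (ne_top_of_le_ne_top (edist_ne_top p q)
    (hausdorffMeasure_segment_inter_le Ω p q))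

lemma segmentLength_nonneg (Ω : Set E) (p q : E) : 0 ≤ segmentLength Ω p q :=
  ENNReal.toReal_nonneg

lemma segmentLength_le_dist (Ω : Set E) (p q : E) : segmentLength Ω p q ≤ dist p q := by
  rw [← ENNReal.ofReal_le_ofReal_iff dist_nonneg, ofReal_segmentLength, ← edist_dist]
  exact hausdorffMeasure_segment_inter_le Ω p q

lemma segmentLength_eq_dist_of_sum_eq {ι : Type*} {s : Finset ι} {Ω : Set E} {u v : ι → E}
    (h : ∑ k ∈ s, μH[1] (segment ℝ (v k) (u k) ∩ Ω) =
      ENNReal.ofReal (∑ k ∈ s, dist (u k) (v k))) :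
    ∀ k ∈ s, segmentLength Ω (v k) (u k) = dist (u k) (v k) := by
  refine (Finset.sum_eq_sum_iff_of_le fun k _ => ?_).1 ?_
  · exact dist_comm (u k) (v k) ▸ segmentLength_le_dist Ω (v k) (u k)
  · simp only [← ofReal_segmentLength] at h
    rwa [← ENNReal.ofReal_sum_of_nonneg fun k _ => segmentLength_nonneg Ω (v k) (u k),
      ENNReal.ofReal_eq_ofReal_iff (Finset.sum_nonneg fun k _ => segmentLength_nonneg _ _ _)
        (Finset.sum_nonneg fun k _ => dist_nonneg)] at h

end SegmentLength

/-! ### Pairs of an interior point and a nearest boundary point -/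

section BoundaryPair

variable {X : Type*} [PseudoMetricSpace X] {Ω : Set X} {p q : X}

/-- The condition that `(P_f)` imposes on each single pair: one of the two points is in `Ω` and the
other one is a nearest boundary point. -/
def IsBoundaryPair (Ω : Set X) (p q : X) : Prop :=
  (p ∈ Ω ∧ q ∈ frontier Ω ∧ dist p q = infDist p (frontier Ω)) ∨
    (q ∈ Ω ∧ p ∈ frontier Ω ∧ dist p q = infDist q (frontier Ω))

namespace IsBoundaryPair

lemma symm (h : IsBoundaryPair Ω p q) : IsBoundaryPair Ω q p := by
  simpa only [IsBoundaryPair, dist_comm, or_comm] using h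

lemma nonempty_frontier (h : IsBoundaryPair Ω p q) : (frontier Ω).Nonempty :=
  h.elim (fun h => ⟨q, h.2.1⟩) fun h => ⟨p, h.2.1⟩

lemma left_mem_closure (h : IsBoundaryPair Ω p q) : p ∈ closure Ω :=
  h.elim (fun h => subset_closure h.1) fun h => frontier_subset_closure h.2.1

lemma left_mem_frontier (h : IsBoundaryPair Ω p q) (hp : p ∉ Ω) : p ∈ frontier Ω :=
  h.elim (fun h => absurd h.1 hp) fun h => h.2.1

lemma right_mem_frontier (h : IsBoundaryPair Ω p q) (hq : q ∉ Ω) : q ∈ frontier Ω :=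
  h.symm.left_mem_frontier hq

lemma not_both_mem (h : IsBoundaryPair Ω p q) (hΩ : IsOpen Ω) : ¬(p ∈ Ω ∧ q ∈ Ω) := by
  have hdisj := disjoint_left.1 (disjoint_iff_inter_eq_empty.2 hΩ.inter_frontier_eq)
  rintro ⟨hp, hq⟩
  exact h.elim (fun h => hdisj hq h.2.1) fun h => hdisj hp h.2.1

lemma discardCost_add_discardCost (h : IsBoundaryPair Ω p q) :
    discardCost (frontier Ω) p + discardCost (frontier Ω) q = min 1 (2 * dist p q) := by
  rcases h with ⟨-, hq, hdist⟩ | ⟨-, hp, hdist⟩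
  · rw [discardCost_of_mem hq, add_zero, hdist, discardCost]
  · rw [discardCost_of_mem hp, zero_add, hdist, discardCost]

end IsBoundaryPair

end BoundaryPair

section Energy

variable {Ω : Set R2} {n : ℕ} {x y : Fin n → R2} {ID : Finset (Fin n)} {τ : Fin n → Fin n}
  {φ : R2 → ℝ}

/-- The indices of the positive interior points that belong to no dipole. -/
def unpairedPos (Ω : Set R2) (x : Fin n → R2) (ID : Finset (Fin n)) : Finset (Fin n) :=
  {k ∈ IDᶜ | x k ∈ Ω}

/-- The indices of the negative interior points that belong to no dipole. -/
def unpairedNeg (Ω : Set R2) (y : Fin n → R2) (ID : Finset (Fin n)) (τ : Fin n → Fin n) :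
    Finset (Fin n) :=
  {j ∈ Finset.univ \ ID.image τ | y j ∈ Ω}

/-- The real number whose image in `ℝ≥0∞` is `energy Ω x y ID τ`. -/
def realEnergy (Ω : Set R2) (x y : Fin n → R2) (ID : Finset (Fin n)) (τ : Fin n → Fin n) : ℝ :=
  (unpairedPos Ω x ID).card + (unpairedNeg Ω y ID τ).card +
    2 * ∑ k ∈ ID, segmentLength Ω (y (τ k)) (x k)

lemma realEnergy_nonneg : 0 ≤ realEnergy Ω x y ID τ := by
  have := Finset.sum_nonneg fun k (_ : k ∈ ID) => segmentLength_nonneg Ω (y (τ k)) (x k)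
  unfold realEnergy
  positivity

lemma energy_eq_ofReal_realEnergy : energy Ω x y ID τ = ENNReal.ofReal (realEnergy Ω x y ID τ) := by
  have hsum := Finset.sum_nonneg fun k (_ : k ∈ ID) => segmentLength_nonneg Ω (y (τ k)) (x k)
  rw [realEnergy, ENNReal.ofReal_add (by positivity) (by positivity),
    ENNReal.ofReal_add (by positivity) (by positivity), ENNReal.ofReal_mul zero_le_two,
    ENNReal.ofReal_sum_of_nonneg fun k _ => segmentLength_nonneg _ _ _]
  simp only [ENNReal.ofReal_natCast, ENNReal.ofReal_ofNat, ofReal_segmentLength]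
  rfl

lemma FlatAdmissible.sub_le_two_mul_segmentLength {p q : R2}
    (hφ : FlatAdmissible Ω (frontier Ω) 2 φ) (hp : p ∈ closure Ω) (hq : q ∈ closure Ω) :
    φ p - φ q ≤ 2 * segmentLength Ω q p := by
  have h := ofReal_sub_le_mul_hausdorffMeasure_inter hφ.1 hφ.2.1
    (convex_segment q p).isPreconnected (right_mem_segment ℝ q p) (left_mem_segment ℝ q p) hp hq
  rwa [← ofReal_segmentLength, ← ENNReal.ofReal_coe_nnreal, NNReal.coe_ofNat,
    ← ENNReal.ofReal_mul zero_le_two, ENNReal.ofReal_le_ofReal_iff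
      (mul_nonneg zero_le_two (segmentLength_nonneg _ _ _))] at h

/-! ### Weak duality and complementary slackness -/

lemma realEnergy_sub_sum_eq_sum_slack (hxy : ∀ k, IsBoundaryPair Ω (x k) (y k))
    (hφ₀ : ∀ p ∈ frontier Ω, φ p = 0) (hτ : InjOn τ ID) :
    realEnergy Ω x y ID τ - ∑ k, (φ (x k) - φ (y k)) =
      ∑ k ∈ unpairedPos Ω x ID, (1 - φ (x k)) + ∑ j ∈ unpairedNeg Ω y ID τ, (1 + φ (y j)) +
        ∑ k ∈ ID, (2 * segmentLength Ω (y (τ k)) (x k) - (φ (x k) - φ (y (τ k)))) := by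
  have hx₀ (k : Fin n) : φ (x k) ≠ 0 → x k ∈ Ω :=
    not_imp_comm.1 fun hk => hφ₀ _ ((hxy k).left_mem_frontier hk)
  have hy₀ (k : Fin n) : φ (y k) ≠ 0 → y k ∈ Ω :=
    not_imp_comm.1 fun hk => hφ₀ _ ((hxy k).right_mem_frontier hk)
  have hxsum : ∑ k, φ (x k) = ∑ k ∈ ID, φ (x k) + ∑ k ∈ unpairedPos Ω x ID, φ (x k) := by
    rw [unpairedPos, Finset.sum_filter_of_ne fun k _ => hx₀ k, Finset.sum_add_sum_compl]
  have hysum : ∑ k, φ (y k) =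
      ∑ k ∈ ID, φ (y (τ k)) + ∑ j ∈ unpairedNeg Ω y ID τ, φ (y j) := by
    rw [unpairedNeg, Finset.sum_filter_of_ne fun k _ => hy₀ k,
      ← Finset.sum_image (f := fun k => φ (y k)) hτ, add_comm,
      Finset.sum_sdiff (Finset.subset_univ _)]
  simp only [realEnergy, Finset.sum_sub_distrib, Finset.sum_add_distrib, hxsum, hysum,
    Finset.sum_const, nsmul_eq_mul, mul_one, ← Finset.mul_sum]
  ring

lemma FlatAdmissible.slack_nonneg (hφ : FlatAdmissible Ω (frontier Ω) 2 φ)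
    (hxy : ∀ k, IsBoundaryPair Ω (x k) (y k)) :
    (∀ k, 0 ≤ 1 - φ (x k)) ∧ (∀ j, 0 ≤ 1 + φ (y j)) ∧
      ∀ k j, 0 ≤ 2 * segmentLength Ω (y j) (x k) - (φ (x k) - φ (y j)) :=
  ⟨fun k => sub_nonneg.2 (abs_le.1 (hφ.2.2 _ (hxy k).left_mem_closure)).2,
    fun j => neg_le_iff_add_nonneg'.1 (abs_le.1 (hφ.2.2 _ (hxy j).symm.left_mem_closure)).1,
    fun k j => sub_nonneg.2 (hφ.sub_le_two_mul_segmentLength (hxy k).left_mem_closure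
      (hxy j).symm.left_mem_closure)⟩

lemma FlatAdmissible.sum_sub_le_realEnergy (hφ : FlatAdmissible Ω (frontier Ω) 2 φ)
    (hxy : ∀ k, IsBoundaryPair Ω (x k) (y k)) (hτ : InjOn τ ID) :
    ∑ k, (φ (x k) - φ (y k)) ≤ realEnergy Ω x y ID τ := by
  obtain ⟨hpos, hneg, hdip⟩ := hφ.slack_nonneg hxy
  rw [← sub_nonneg, realEnergy_sub_sum_eq_sum_slack hxy hφ.2.1 hτ]
  exact add_nonneg (add_nonneg (Finset.sum_nonneg fun k _ => hpos k)
    (Finset.sum_nonneg fun j _ => hneg j)) (Finset.sum_nonneg fun k _ => hdip k (τ k))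

/-- The slackness relations between a test function `φ` and the dipole configuration `(ID, τ)`:
each term of the energy equals the contribution of `φ` at the points that it involves. -/
structure IsCalibrated (Ω : Set R2) (x y : Fin n → R2) (ID : Finset (Fin n)) (τ : Fin n → Fin n)
    (φ : R2 → ℝ) : Prop where
  pos : ∀ k ∈ IDᶜ, x k ∈ Ω → φ (x k) = 1
  neg : ∀ j, j ∉ ID.image τ → y j ∈ Ω → φ (y j) = -1
  dipole : ∀ k ∈ ID, φ (x k) - φ (y (τ k)) = 2 * segmentLength Ω (y (τ k)) (x k)

lemma FlatAdmissible.isCalibrated_of_realEnergy_le (hφ : FlatAdmissible Ω (frontier Ω) 2 φ)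
    (hxy : ∀ k, IsBoundaryPair Ω (x k) (y k)) (hτ : InjOn τ ID)
    (hle : realEnergy Ω x y ID τ ≤ ∑ k, (φ (x k) - φ (y k))) : IsCalibrated Ω x y ID τ φ := by
  obtain ⟨hpos, hneg, hdip⟩ := hφ.slack_nonneg hxy
  have hsum := realEnergy_sub_sum_eq_sum_slack hxy hφ.2.1 hτ
  have hpos_sum := (unpairedPos Ω x ID).sum_nonneg fun k _ => hpos k
  have hneg_sum := (unpairedNeg Ω y ID τ).sum_nonneg fun j _ => hneg j
  have hdip_sum := ID.sum_nonneg fun k _ => hdip k (τ k)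
  have hpos_eq := (Finset.sum_eq_zero_iff_of_nonneg fun k _ => hpos k).1
    (show ∑ k ∈ unpairedPos Ω x ID, (1 - φ (x k)) = 0 by linarith)
  have hneg_eq := (Finset.sum_eq_zero_iff_of_nonneg fun j _ => hneg j).1
    (show ∑ j ∈ unpairedNeg Ω y ID τ, (1 + φ (y j)) = 0 by linarith)
  have hdip_eq := (Finset.sum_eq_zero_iff_of_nonneg fun k _ => hdip k (τ k)).1
    (show ∑ k ∈ ID, (2 * segmentLength Ω (y (τ k)) (x k) - (φ (x k) - φ (y (τ k)))) = 0 by linarith)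
  refine ⟨fun k hk hxk => ?_, fun j hj hyj => ?_, fun k hk => ?_⟩
  · linarith [hpos_eq k (Finset.mem_filter.2 ⟨hk, hxk⟩)]
  · linarith [hneg_eq j (Finset.mem_filter.2 ⟨by simpa using hj, hyj⟩)]
  · linarith [hdip_eq k hk]

/-! ### A dipole configuration from an optimal assignment -/

lemma card_unpairedPos_add_card_unpairedNeg_le (hΩ : IsOpen Ω)
    (hxy : ∀ k, IsBoundaryPair Ω (x k) (y k)) {R : Finset (Fin n)}
    (hpos : unpairedPos Ω x ID ⊆ R) (hneg : unpairedNeg Ω y ID τ ⊆ R) :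
    (unpairedPos Ω x ID).card + (unpairedNeg Ω y ID τ).card ≤ R.card := by
  have hdisj : Disjoint (unpairedPos Ω x ID) (unpairedNeg Ω y ID τ) :=
    Finset.disjoint_left.2 fun k hx hy =>
      (hxy k).not_both_mem hΩ ⟨(Finset.mem_filter.1 hx).2, (Finset.mem_filter.1 hy).2⟩
  rw [← Finset.card_union_of_disjoint hdisj]
  exact Finset.card_le_card (Finset.union_subset hpos hneg)

/-- The pairs none of whose two points belongs to one of the dipoles `(x k, y (σ k))`, `k ∈ A`. -/
def untouchedPairs (σ : Fin n → Fin n) (A : Finset (Fin n)) : Finset (Fin n) :=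
  (A ∪ A.image σ)ᶜ

lemma disjoint_untouchedPairs (σ : Fin n → Fin n) (A : Finset (Fin n)) :
    Disjoint A (untouchedPairs σ A) ∧ Disjoint (A.image σ) (untouchedPairs σ A) :=
  Finset.disjoint_union_left.1 disjoint_compl_right

lemma card_unpaired_piecewise_le (hΩ : IsOpen Ω) (hxy : ∀ k, IsBoundaryPair Ω (x k) (y k))
    {σ : Fin n → Fin n} {A B : Finset (Fin n)} (hA : ∀ k ∈ A, x k ∈ Ω ∧ y (σ k) ∈ Ω)
    (hAB : Disjoint A B) :
    (unpairedPos Ω x (A ∪ B)).card + (unpairedNeg Ω y (A ∪ B) (A.piecewise σ id)).card ≤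
      (untouchedPairs σ A \ B).card := by
  refine card_unpairedPos_add_card_unpairedNeg_le hΩ hxy (fun k hk => ?_) fun j hj => ?_
  · obtain ⟨hk, hxk⟩ := Finset.mem_filter.1 hk
    have hkσ : k ∉ A.image σ := fun h => by
      obtain ⟨i, hi, rfl⟩ := Finset.mem_image.1 h
      exact (hxy (σ i)).not_both_mem hΩ ⟨hxk, (hA i hi).2⟩
    simp_all [untouchedPairs]
  · obtain ⟨hj, hyj⟩ := Finset.mem_filter.1 hj
    have hjA : j ∉ A := fun h => (hxy j).not_both_mem hΩ ⟨(hA j h).1, hyj⟩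
    rw [image_piecewise_id_union hAB] at hj
    simp_all [untouchedPairs]

lemma realEnergy_piecewise_le (hΩ : IsOpen Ω) (hxy : ∀ k, IsBoundaryPair Ω (x k) (y k))
    {σ : Fin n → Fin n} {A B : Finset (Fin n)} (hA : ∀ k ∈ A, x k ∈ Ω ∧ y (σ k) ∈ Ω)
    (hAB : Disjoint A B) :
    realEnergy Ω x y (A ∪ B) (A.piecewise σ id) ≤
      ∑ k ∈ A, 2 * dist (x k) (y (σ k)) +
        (∑ k ∈ B, 2 * dist (x k) (y k) + (untouchedPairs σ A \ B).card) := by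
  have hcard : ((unpairedPos Ω x (A ∪ B)).card + (unpairedNeg Ω y (A ∪ B) (A.piecewise σ id)).card :
      ℝ) ≤ (untouchedPairs σ A \ B).card := by
    exact_mod_cast card_unpaired_piecewise_le hΩ hxy hA hAB
  have hlen : ∑ k ∈ A ∪ B, segmentLength Ω (y (A.piecewise σ id k)) (x k) ≤
      ∑ k ∈ A, dist (x k) (y (σ k)) + ∑ k ∈ B, dist (x k) (y k) := by
    rw [Finset.sum_union hAB]
    gcongr with k hk k hk
    · rw [A.piecewise_eq_of_mem _ _ hk, dist_comm]
      exact segmentLength_le_dist _ _ _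
    · rw [A.piecewise_eq_of_notMem _ _ (Finset.disjoint_right.1 hAB hk), dist_comm]
      exact segmentLength_le_dist _ _ _
  rw [realEnergy, ← Finset.mul_sum, ← Finset.mul_sum]
  linarith

lemma exists_realEnergy_le_sum_dist_add_sum_min (hΩ : IsOpen Ω)
    (hxy : ∀ k, IsBoundaryPair Ω (x k) (y k)) {σ : Fin n → Fin n} {A : Finset (Fin n)}
    (hσ : InjOn σ A) (hA : ∀ k ∈ A, x k ∈ Ω ∧ y (σ k) ∈ Ω) :
    ∃ (ID : Finset (Fin n)) (τ : Fin n → Fin n), InjOn τ ID ∧ realEnergy Ω x y ID τ ≤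
      ∑ k ∈ A, 2 * dist (x k) (y (σ k)) +
        ∑ k ∈ untouchedPairs σ A, min 1 (2 * dist (x k) (y k)) := by
  set near : Finset (Fin n) := {k ∈ untouchedPairs σ A | 2 * dist (x k) (y k) ≤ 1}
  have hsub : near ⊆ untouchedPairs σ A := Finset.filter_subset _ _
  obtain ⟨hdisj, hdisj_image⟩ := disjoint_untouchedPairs σ A
  have hmin : ∑ k ∈ untouchedPairs σ A, min 1 (2 * dist (x k) (y k)) =
      ∑ k ∈ near, 2 * dist (x k) (y k) + (untouchedPairs σ A \ near).card := by
    rw [← Finset.sum_sdiff hsub, add_comm]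
    congr 1
    · exact Finset.sum_congr rfl fun k hk => min_eq_right (Finset.mem_filter.1 hk).2
    · refine (Finset.sum_congr rfl fun k hk => min_eq_left ?_).trans (by simp)
      obtain ⟨hk, hk_near⟩ := Finset.mem_sdiff.1 hk
      exact (not_le.1 fun h => hk_near (Finset.mem_filter.2 ⟨hk, h⟩)).le
  refine ⟨A ∪ near, A.piecewise σ id, injOn_piecewise_id_union hσ (hdisj.mono_right hsub)
    (hdisj_image.mono_right hsub), ?_⟩
  rw [hmin]
  exact realEnergy_piecewise_le hΩ hxy hA (hdisj.mono_right hsub)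

/-- The indices `k` such that `x k` and `y (σ k)` are interior points which it is cheaper to pair
with each other than to discard. -/
def directPairs (Ω : Set R2) (x y : Fin n → R2) (σ : Fin n → Fin n) : Finset (Fin n) :=
  {k | x k ∈ Ω ∧ y (σ k) ∈ Ω ∧ 2 * dist (x k) (y (σ k)) ≤
    discardCost (frontier Ω) (x k) + discardCost (frontier Ω) (y (σ k))}

lemma transportCost_of_mem_directPairs {σ : Fin n → Fin n} {k : Fin n}
    (hk : k ∈ directPairs Ω x y σ) :
    transportCost (frontier Ω) (x k) (y (σ k)) = 2 * dist (x k) (y (σ k)) :=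
  min_eq_left (Finset.mem_filter.1 hk).2.2.2

lemma transportCost_of_notMem_directPairs (hxy : ∀ k, IsBoundaryPair Ω (x k) (y k))
    {σ : Fin n → Fin n} {k : Fin n} (hk : k ∉ directPairs Ω x y σ) :
    transportCost (frontier Ω) (x k) (y (σ k)) =
      discardCost (frontier Ω) (x k) + discardCost (frontier Ω) (y (σ k)) := by
  by_cases hx : x k ∈ Ω
  · by_cases hy : y (σ k) ∈ Ω
    · refine min_eq_right (not_le.1 fun h => hk ?_).le
      exact Finset.mem_filter.2 ⟨Finset.mem_univ k, hx, hy, h⟩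
    · exact transportCost_of_right_mem ((hxy _).right_mem_frontier hy)
  · exact transportCost_of_left_mem ((hxy k).left_mem_frontier hx)

lemma sum_dist_add_sum_min_le_sum_transportCost (hxy : ∀ k, IsBoundaryPair Ω (x k) (y k))
    (σ : Equiv.Perm (Fin n)) :
    ∑ k ∈ directPairs Ω x y σ, 2 * dist (x k) (y (σ k)) +
        ∑ k ∈ untouchedPairs σ (directPairs Ω x y σ), min 1 (2 * dist (x k) (y k)) ≤
      ∑ k, transportCost (frontier Ω) (x k) (y (σ k)) := by
  set A := directPairs Ω x y σ
  have hreindex : ∑ k ∈ Aᶜ, discardCost (frontier Ω) (y (σ k)) =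
      ∑ j ∈ (A.image σ)ᶜ, discardCost (frontier Ω) (y j) :=
    Finset.sum_bijective σ σ.bijective (by simp) fun _ _ => rfl
  rw [← Finset.sum_add_sum_compl A, Finset.sum_congr rfl fun k => transportCost_of_mem_directPairs,
    Finset.sum_congr rfl fun k hk => transportCost_of_notMem_directPairs hxy
      (Finset.mem_compl.1 hk), Finset.sum_add_distrib, hreindex]
  simp only [← (hxy _).discardCost_add_discardCost, Finset.sum_add_distrib]
  have hx : untouchedPairs σ A ⊆ Aᶜ := Finset.compl_subset_compl.2 Finset.subset_union_left
  have hy : untouchedPairs σ A ⊆ (A.image σ)ᶜ :=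
    Finset.compl_subset_compl.2 Finset.subset_union_right
  gcongr <;> exact fun _ _ _ => discardCost_nonneg _ _

lemma exists_realEnergy_le_sum_transportCost (hΩ : IsOpen Ω)
    (hxy : ∀ k, IsBoundaryPair Ω (x k) (y k)) (σ : Equiv.Perm (Fin n)) :
    ∃ (ID : Finset (Fin n)) (τ : Fin n → Fin n), InjOn τ ID ∧
      realEnergy Ω x y ID τ ≤ ∑ k, transportCost (frontier Ω) (x k) (y (σ k)) := by
  have hA : ∀ k ∈ directPairs Ω x y σ, x k ∈ Ω ∧ y (σ k) ∈ Ω := fun k hk =>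
    ⟨(Finset.mem_filter.1 hk).2.1, (Finset.mem_filter.1 hk).2.2.1⟩
  obtain ⟨ID, τ, hτ, hle⟩ :=
    exists_realEnergy_le_sum_dist_add_sum_min hΩ hxy σ.injective.injOn hA
  exact ⟨ID, τ, hτ, hle.trans (sum_dist_add_sum_min_le_sum_transportCost hxy σ)⟩

/-! ### Strong duality -/

lemma flatAdmissible_sub_const_of_sub_le_transportCost {ψ : R2 → ℝ} {b : R2}
    (hψ : ∀ p q, ψ p - ψ q ≤ transportCost (frontier Ω) p q) (hb : b ∈ frontier Ω) :
    FlatAdmissible Ω (frontier Ω) 2 fun p => ψ p - ψ b := by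
  have habs := abs_sub_le_discardCost hψ hb
  refine ⟨(lipschitzWith_of_sub_le_transportCost (S := frontier Ω) fun p q => ?_).lipschitzOnWith,
    fun p hp => abs_nonpos_iff.1 (discardCost_of_mem hp ▸ habs p),
    fun p _ => (habs p).trans (discardCost_le_one _ _)⟩
  simpa using hψ p q

lemma exists_flatAdmissible_sum_eq_sum_transportCost (hxy : ∀ k, IsBoundaryPair Ω (x k) (y k)) :
    ∃ (φ : R2 → ℝ) (σ : Equiv.Perm (Fin n)), FlatAdmissible Ω (frontier Ω) 2 φ ∧
      ∑ k, (φ (x k) - φ (y k)) = ∑ k, transportCost (frontier Ω) (x k) (y (σ k)) := by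
  cases isEmpty_or_nonempty (Fin n)
  · exact ⟨0, 1, ⟨((LipschitzWith.const 0).weaken zero_le).lipschitzOnWith, by simp, by simp⟩,
      by simp⟩
  obtain ⟨b, hb⟩ := (hxy (Classical.arbitrary _)).nonempty_frontier
  obtain ⟨ψ, σ, hψ, htight⟩ := exists_potential_perm_tight
    (transportCost_self (frontier Ω)) (transportCost_triangle (frontier Ω)) x y
  refine ⟨fun p => ψ p - ψ b, σ, flatAdmissible_sub_const_of_sub_le_transportCost hψ hb, ?_⟩
  simp only [sub_sub_sub_cancel_right, ← htight, Finset.sum_sub_distrib,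
    Equiv.sum_comp σ fun k => ψ (y k)]

theorem exists_flatAdmissible_realEnergy_le (hΩ : IsOpen Ω)
    (hxy : ∀ k, IsBoundaryPair Ω (x k) (y k)) :
    ∃ (φ : R2 → ℝ) (ID : Finset (Fin n)) (τ : Fin n → Fin n),
      FlatAdmissible Ω (frontier Ω) 2 φ ∧ InjOn τ ID ∧
        realEnergy Ω x y ID τ ≤ ∑ k, (φ (x k) - φ (y k)) := by
  obtain ⟨φ, σ, hφ, hsum⟩ := exists_flatAdmissible_sum_eq_sum_transportCost hxy
  obtain ⟨ID, τ, hτ, hle⟩ := exists_realEnergy_le_sum_transportCost hΩ hxy σ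
  exact ⟨φ, ID, τ, hφ, hτ, hsum ▸ hle⟩

theorem sInf_energy_eq_iSup_of_realEnergy_le (hxy : ∀ k, IsBoundaryPair Ω (x k) (y k))
    (hφ : FlatAdmissible Ω (frontier Ω) 2 φ) (hτ : InjOn τ ID)
    (hle : realEnergy Ω x y ID τ ≤ ∑ k, (φ (x k) - φ (y k))) :
    sInf {e : ℝ≥0∞ | ∃ (ID' : Finset (Fin n)) (τ' : Fin n → Fin n),
        InjOn τ' ↑ID' ∧ e = energy Ω x y ID' τ'} =
      ⨆ φ ∈ {φ : R2 → ℝ | FlatAdmissible Ω (frontier Ω) 2 φ},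
        ENNReal.ofReal (∑ k, (φ (x k) - φ (y k))) := by
  apply le_antisymm
  · calc sInf {e : ℝ≥0∞ | ∃ (ID' : Finset (Fin n)) (τ' : Fin n → Fin n),
          InjOn τ' ↑ID' ∧ e = energy Ω x y ID' τ'}
      _ ≤ energy Ω x y ID τ := sInf_le ⟨ID, τ, hτ, rfl⟩
      _ ≤ ENNReal.ofReal (∑ k, (φ (x k) - φ (y k))) :=
        energy_eq_ofReal_realEnergy.trans_le (ENNReal.ofReal_le_ofReal hle)
      _ ≤ _ := le_iSup₂ (f := fun (φ : R2 → ℝ) (_ : φ ∈ {φ | FlatAdmissible Ω (frontier Ω) 2 φ}) =>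
          ENNReal.ofReal (∑ k, (φ (x k) - φ (y k)))) φ hφ
  · refine iSup₂_le fun φ' hφ' => le_sInf ?_
    rintro _ ⟨ID', τ', hτ', rfl⟩
    rw [energy_eq_ofReal_realEnergy]
    exact ENNReal.ofReal_le_ofReal (hφ'.sum_sub_le_realEnergy hxy hτ')

end Energy

theorem minimal_lipschitz_function_general {Ω : Set R2} (hΩ : IsOpen Ω) {n : ℕ} {x y : Fin n → R2}
    (hxy : ∀ k, IsBoundaryPair Ω (x k) (y k)) :
    (∃ φ : R2 → ℝ, FlatAdmissible Ω (frontier Ω) 2 φ ∧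
      ∀ (ID : Finset (Fin n)) (τ : Fin n → Fin n), InjOn τ ↑ID →
        (∀ (ID' : Finset (Fin n)) (τ' : Fin n → Fin n), InjOn τ' ↑ID' →
          energy Ω x y ID τ ≤ energy Ω x y ID' τ') →
        ENNReal.ofReal (∑ k, (φ (x k) - φ (y k))) = energy Ω x y ID τ ∧
          IsCalibrated Ω x y ID τ φ) ∧
    sInf {e : ℝ≥0∞ | ∃ (ID' : Finset (Fin n)) (τ' : Fin n → Fin n),
        InjOn τ' ↑ID' ∧ e = energy Ω x y ID' τ'} =
      ⨆ φ ∈ {φ : R2 → ℝ | FlatAdmissible Ω (frontier Ω) 2 φ},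
        ENNReal.ofReal (∑ k, (φ (x k) - φ (y k))) := by
  obtain ⟨φ, ID₀, τ₀, hφ, hτ₀, hle₀⟩ := exists_flatAdmissible_realEnergy_le hΩ hxy
  refine ⟨⟨φ, hφ, fun ID τ hτ hmin => ?_⟩, sInf_energy_eq_iSup_of_realEnergy_le hxy hφ hτ₀ hle₀⟩
  have hle : realEnergy Ω x y ID τ ≤ ∑ k, (φ (x k) - φ (y k)) := by
    have hmin₀ := hmin ID₀ τ₀ hτ₀
    rw [energy_eq_ofReal_realEnergy, energy_eq_ofReal_realEnergy,
      ENNReal.ofReal_le_ofReal_iff realEnergy_nonneg] at hmin₀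
    exact hmin₀.trans hle₀
  refine ⟨?_, hφ.isCalibrated_of_realEnergy_le hxy hτ hle⟩
  rw [energy_eq_ofReal_realEnergy, (hφ.sum_sub_le_realEnergy hxy hτ).antisymm hle]

/-- **Proposition (optimal test function; Appendix).** Given a minimizer
`(I_Dᶜ, I_D, τ)` of the energy as in the structure lemma, there is
`φ ∈ Lip₀(Ω)` with `‖φ‖_∞ ≤ 1`, `lip(φ) ≤ 2`, such that `T(φ) = E(I_P,I_D,τ)`, with
`φ = 1` at the uncoupled positive interior points, `φ = −1` at the uncoupled negative
interior points and `φ(x_k) − φ(y_{τ(k)}) = 2|x_k − y_{τ(k)}|` on dipoles; in particular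
the minimum of the energy equals the maximum defining the flat norm. -/
theorem minimal_lipschitz_function (Ω : Set R2) (hΩo : IsOpen Ω)
    (hΩb : Bornology.IsBounded Ω) (hΩc : IsConnected Ω) (hΩl : HasLipschitzBoundary Ω)
    (n : ℕ) (x y : Fin n → R2) (hPf : SatisfiesPf Ω x y)
    (ID : Finset (Fin n)) (τ : Fin n → Fin n) (hinj : Set.InjOn τ ↑ID)
    (hmin : ∀ (ID' : Finset (Fin n)) (τ' : Fin n → Fin n), Set.InjOn τ' ↑ID' →
      energy Ω x y ID τ ≤ energy Ω x y ID' τ')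
    (hseg : ∀ k ∈ ID, openSegment ℝ (y (τ k)) (x k) ⊆ Ω)
    (hlen : ∑ k ∈ ID, μH[1] (segment ℝ (y (τ k)) (x k) ∩ Ω) =
      ENNReal.ofReal (∑ k ∈ ID, dist (x k) (y (τ k))))
    (hfix : ∀ k ∈ ID, ((x k ∈ Ω ∧ y (τ k) ∈ frontier Ω) ∨ (x k ∈ frontier Ω ∧ y (τ k) ∈ Ω)) →
      τ k = k) :
    (∃ φ : R2 → ℝ, FlatAdmissible Ω (frontier Ω) 2 φ ∧
      ENNReal.ofReal (∑ k, (φ (x k) - φ (y k))) = energy Ω x y ID τ ∧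
      (∀ k ∈ IDᶜ, x k ∈ Ω → φ (x k) = 1) ∧
      (∀ j, j ∉ ID.image τ → y j ∈ Ω → φ (y j) = -1) ∧
      (∀ k ∈ ID, φ (x k) - φ (y (τ k)) = 2 * dist (x k) (y (τ k)))) ∧
    sInf {e : ℝ≥0∞ | ∃ (ID' : Finset (Fin n)) (τ' : Fin n → Fin n),
        Set.InjOn τ' ↑ID' ∧ e = energy Ω x y ID' τ'} =
      ⨆ φ ∈ {φ : R2 → ℝ | FlatAdmissible Ω (frontier Ω) 2 φ},
        ENNReal.ofReal (∑ k, (φ (x k) - φ (y k))) := by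
  obtain ⟨⟨φ, hφ, hopt⟩, hduality⟩ := minimal_lipschitz_function_general hΩo hPf.1
  obtain ⟨hsum, hcal⟩ := hopt ID τ hinj hmin
  exact ⟨⟨φ, hφ, hsum, hcal.pos, hcal.neg, fun k hk =>
    (hcal.dipole k hk).trans (by rw [segmentLength_eq_dist_of_sum_eq hlen k hk])⟩, hduality⟩
end
end
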